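/- arXiv:0801.0300 — 3 statements merged into one kernel-verified Lean document; each statement's English description precedes it below -/
import Mathlib

section
/- (Liouville's Lemma) The tuple (A₀,A₁,A₂,A₃) is metrisable near a point p ∈ U if and only if there exist smooth functions ψ₁, ψ₂, ψ₃ on a neighbourhood of p that solve the Liouville linear system and satisfy ψ₁ψ₃ − ψ₂² ≠ 0 at p. Explicitly, if (ψ₁,ψ₂,ψ₃) is such a solution then on the set where Δ := ψ₁ψ₃ − ψ₂² ≠ 0 the functions E = ψ₁/Δ², F = ψ₂/Δ², G = ψ₃/Δ² satisfy the four metrisability equations; conversely, if (E,F,G) realise the metrisability equations near p, then a solution (ψ₁,ψ₂,ψ₃) of the Liouville system with ψ₁ψ₃ − ψ₂² ≠ 0 at p exists. -/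
/-! Both directions are pointwise computations. With `D = EG - F²`, a metric `(E, F, G)` and a
nondegenerate solution `(ψ₁, ψ₂, ψ₃)` correspond by the rescalings `E = ψ₁ / Δ²` (so `D = Δ⁻³`)
and `ψ₁ = E |D|^(-2/3)`, and likewise for the other components; the absolute value, encoded as
`(D²)^(-1/3)`, allows metrics of any signature. The rescaled first derivatives are substituted
into the nonlinear equations (`metric_of_solution_algebra`) or into the linear ones
(`solution_of_metric_algebra`), which then become rational identities. Given a solution that is
nondegenerate only at `p`, the neighbourhood is shrunk to the open set where `Δ ≠ 0`. -/

noncomputable section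

open Matrix

/-- Partial derivative in the first (x) variable. -/
def pdx (f : ℝ × ℝ → ℝ) : ℝ × ℝ → ℝ :=
  fun p => deriv (fun t => f (t, p.2)) p.1

/-- Partial derivative in the second (y) variable. -/
def pdy (f : ℝ × ℝ → ℝ) : ℝ × ℝ → ℝ :=
  fun p => deriv (fun t => f (p.1, t)) p.2

/-- `pd 0 = ∂ₓ`, `pd 1 = ∂_y`. -/
def pd : Fin 2 → (ℝ × ℝ → ℝ) → (ℝ × ℝ → ℝ) := ![pdx, pdy]

/-- The Liouville linear system associated to `(A0, A1, A2, A3)`, holding on `U`. -/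
def LiouvilleSystem (U : Set (ℝ × ℝ)) (A0 A1 A2 A3 ψ1 ψ2 ψ3 : ℝ × ℝ → ℝ) : Prop :=
  ∀ p ∈ U,
    pdx ψ1 p = (2/3) * A1 p * ψ1 p - 2 * A0 p * ψ2 p ∧
    pdy ψ3 p = 2 * A3 p * ψ2 p - (2/3) * A2 p * ψ3 p ∧
    pdy ψ1 p + 2 * pdx ψ2 p
      = (4/3) * A2 p * ψ1 p - (2/3) * A1 p * ψ2 p - 2 * A0 p * ψ3 p ∧
    pdx ψ3 p + 2 * pdy ψ2 p
      = 2 * A3 p * ψ1 p - (4/3) * A1 p * ψ3 p + (2/3) * A2 p * ψ2 p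

/-- `(A0, A1, A2, A3)` is metrisable near `p` (within `U`). -/
def MetrisableNear (U : Set (ℝ × ℝ)) (A0 A1 A2 A3 : ℝ × ℝ → ℝ) (p : ℝ × ℝ) : Prop :=
  ∃ V : Set (ℝ × ℝ), IsOpen V ∧ p ∈ V ∧ V ⊆ U ∧
    ∃ E F G : ℝ × ℝ → ℝ,
      ContDiffOn ℝ (⊤ : ℕ∞) E V ∧ ContDiffOn ℝ (⊤ : ℕ∞) F V ∧ ContDiffOn ℝ (⊤ : ℕ∞) G V ∧
      (∀ q ∈ V, E q * G q - (F q) ^ 2 ≠ 0) ∧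
      (∀ q ∈ V,
        A0 q = (E q * pdy E q - 2 * E q * pdx F q + F q * pdx E q)
                 / (2 * (E q * G q - (F q) ^ 2)) ∧
        A1 q = (3 * F q * pdy E q + G q * pdx E q - 2 * F q * pdx F q - 2 * E q * pdx G q)
                 / (2 * (E q * G q - (F q) ^ 2)) ∧
        A2 q = (2 * F q * pdy F q + 2 * G q * pdy E q - 3 * F q * pdx G q - E q * pdy G q)
                 / (2 * (E q * G q - (F q) ^ 2)) ∧
        A3 q = (2 * G q * pdy F q - G q * pdx G q - F q * pdy G q)
                 / (2 * (E q * G q - (F q) ^ 2)))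

end

/-- A function smooth near `q` has a derivative along the horizontal line through `q`. -/
lemma hasDerivAt_pdx {V : Set (ℝ × ℝ)} (hV : IsOpen V) {f : ℝ × ℝ → ℝ}
    (hf : ContDiffOn ℝ (⊤ : ℕ∞) f V) {q : ℝ × ℝ} (hq : q ∈ V) :
    HasDerivAt (fun t => f (t, q.2)) (pdx f q) q.1 := by
  have hd : DifferentiableAt ℝ f (q.1, q.2) :=
    (hf.contDiffAt (hV.mem_nhds hq)).differentiableAt (by simp)
  have : DifferentiableAt ℝ (fun t => f (t, q.2)) q.1 :=
    DifferentiableAt.comp (g := f) (f := fun t : ℝ => (t, q.2)) q.1 hd (by fun_prop)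
  exact this.hasDerivAt

/-- A function smooth near `q` has a derivative along the vertical line through `q`. -/
lemma hasDerivAt_pdy {V : Set (ℝ × ℝ)} (hV : IsOpen V) {f : ℝ × ℝ → ℝ}
    (hf : ContDiffOn ℝ (⊤ : ℕ∞) f V) {q : ℝ × ℝ} (hq : q ∈ V) :
    HasDerivAt (fun t => f (q.1, t)) (pdy f q) q.2 := by
  have hd : DifferentiableAt ℝ f (q.1, q.2) :=
    (hf.contDiffAt (hV.mem_nhds hq)).differentiableAt (by simp)
  have : DifferentiableAt ℝ (fun t => f (q.1, t)) q.2 :=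
    DifferentiableAt.comp (g := f) (f := fun t : ℝ => (q.1, t)) q.2 hd (by fun_prop)
  exact this.hasDerivAt

/-- The derivative of `u / Δ²`, where `Δ = a c - b²`, along a curve. -/
lemma hasDerivAt_div_disc_sq {u a b c : ℝ → ℝ} {du da db dc t : ℝ}
    (hu : HasDerivAt u du t) (ha : HasDerivAt a da t) (hb : HasDerivAt b db t)
    (hc : HasDerivAt c dc t) (h : a t * c t - b t ^ 2 ≠ 0) :
    HasDerivAt (fun s => u s / (a s * c s - b s ^ 2) ^ 2)
      (du / (a t * c t - b t ^ 2) ^ 2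
        - 2 * u t * (da * c t + a t * dc - 2 * b t * db) / (a t * c t - b t ^ 2) ^ 3) t := by
  refine (hu.fun_div (((ha.fun_mul hc).fun_sub (hb.fun_pow 2)).fun_pow 2)
    (pow_ne_zero 2 h)).congr_deriv ?_
  field_simp
  push_cast
  ring

/-- The derivative of `u |D|^(-2/3)`, where `D = a c - b²`, along a curve. -/
lemma hasDerivAt_mul_disc_rpow {u a b c : ℝ → ℝ} {du da db dc t : ℝ}
    (hu : HasDerivAt u du t) (ha : HasDerivAt a da t) (hb : HasDerivAt b db t)
    (hc : HasDerivAt c dc t) (h : a t * c t - b t ^ 2 ≠ 0) :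
    HasDerivAt (fun s => u s * ((a s * c s - b s ^ 2) ^ 2) ^ (-1 / 3 : ℝ))
      (((a t * c t - b t ^ 2) ^ 2) ^ (-1 / 3 : ℝ) *
        (du - 2 / 3 * u t * (da * c t + a t * dc - 2 * b t * db) / (a t * c t - b t ^ 2))) t := by
  have h2 : (a t * c t - b t ^ 2) ^ 2 ≠ 0 := pow_ne_zero 2 h
  refine (hu.fun_mul ((((ha.fun_mul hc).fun_sub (hb.fun_pow 2)).fun_pow 2).rpow_const
    (p := (-1 / 3 : ℝ)) (Or.inl h2))).congr_deriv ?_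
  rw [Real.rpow_sub_one h2]
  field_simp
  push_cast
  ring

/-- The algebraic content of the passage from solutions to metrics: `a, b, c` stand for the values
of `ψ₁, ψ₂, ψ₃`, and subscripts `x, y` for those of their partial derivatives. -/
lemma metric_of_solution_algebra {A0 A1 A2 A3 a b c ax bx cx ay b_y cy : ℝ}
    (hd : a * c - b ^ 2 ≠ 0)
    (h1 : ax = (2/3) * A1 * a - 2 * A0 * b)
    (h2 : cy = 2 * A3 * b - (2/3) * A2 * c)
    (h3 : ay + 2 * bx = (4/3) * A2 * a - (2/3) * A1 * b - 2 * A0 * c)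
    (h4 : cx + 2 * b_y = 2 * A3 * a - (4/3) * A1 * c + (2/3) * A2 * b)
    {d E F G Ex Fx Gx Ey Fy Gy : ℝ} (hdd : d = a * c - b ^ 2)
    (hE : E = a / d ^ 2) (hF : F = b / d ^ 2) (hG : G = c / d ^ 2)
    (hEx : Ex = ax / d ^ 2 - 2 * a * (ax * c + a * cx - 2 * b * bx) / d ^ 3)
    (hFx : Fx = bx / d ^ 2 - 2 * b * (ax * c + a * cx - 2 * b * bx) / d ^ 3)
    (hGx : Gx = cx / d ^ 2 - 2 * c * (ax * c + a * cx - 2 * b * bx) / d ^ 3)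
    (hEy : Ey = ay / d ^ 2 - 2 * a * (ay * c + a * cy - 2 * b * b_y) / d ^ 3)
    (hFy : Fy = b_y / d ^ 2 - 2 * b * (ay * c + a * cy - 2 * b * b_y) / d ^ 3)
    (hGy : Gy = cy / d ^ 2 - 2 * c * (ay * c + a * cy - 2 * b * b_y) / d ^ 3) :
    E * G - F ^ 2 ≠ 0 ∧
    A0 = (E * Ey - 2 * E * Fx + F * Ex) / (2 * (E * G - F ^ 2)) ∧
    A1 = (3 * F * Ey + G * Ex - 2 * F * Fx - 2 * E * Gx) / (2 * (E * G - F ^ 2)) ∧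
    A2 = (2 * F * Fy + 2 * G * Ey - 3 * F * Gx - E * Gy) / (2 * (E * G - F ^ 2)) ∧
    A3 = (2 * G * Fy - G * Gx - F * Gy) / (2 * (E * G - F ^ 2)) := by
  have hd0 : d ≠ 0 := hdd ▸ hd
  have hD : E * G - F ^ 2 = 1 / d ^ 3 := by
    rw [hE, hF, hG]; field_simp; rw [hdd]
  obtain rfl : ay = (4/3) * A2 * a - (2/3) * A1 * b - 2 * A0 * c - 2 * bx := by linarith
  obtain rfl : cx = 2 * A3 * a - (4/3) * A1 * c + (2/3) * A2 * b - 2 * b_y := by linarith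
  subst h1 h2
  rw [hD]
  refine ⟨by positivity, ?_, ?_, ?_, ?_⟩ <;>
  · subst hE hF hG hEx hFx hGx hEy hFy hGy
    field_simp
    subst hdd
    ring

/-- The algebraic content of the passage from metrics to solutions: `h` stands for the value of
`|EG - F²|^(-2/3)`, and `(h E, h F, h G)` is the solution. -/
lemma solution_of_metric_algebra {A0 A1 A2 A3 E F G Ex Fx Gx Ey Fy Gy D h Dx Dy : ℝ}
    (hD0 : D ≠ 0) (hD : D = E * G - F ^ 2)
    (hDx : Dx = Ex * G + E * Gx - 2 * F * Fx) (hDy : Dy = Ey * G + E * Gy - 2 * F * Fy)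
    (h0 : A0 = (E * Ey - 2 * E * Fx + F * Ex) / (2 * D))
    (h1 : A1 = (3 * F * Ey + G * Ex - 2 * F * Fx - 2 * E * Gx) / (2 * D))
    (h2 : A2 = (2 * F * Fy + 2 * G * Ey - 3 * F * Gx - E * Gy) / (2 * D))
    (h3 : A3 = (2 * G * Fy - G * Gx - F * Gy) / (2 * D)) :
    h * (Ex - 2 / 3 * E * Dx / D) = (2/3) * A1 * (E * h) - 2 * A0 * (F * h) ∧
    h * (Gy - 2 / 3 * G * Dy / D) = 2 * A3 * (F * h) - (2/3) * A2 * (G * h) ∧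
    h * (Ey - 2 / 3 * E * Dy / D) + 2 * (h * (Fx - 2 / 3 * F * Dx / D))
      = (4/3) * A2 * (E * h) - (2/3) * A1 * (F * h) - 2 * A0 * (G * h) ∧
    h * (Gx - 2 / 3 * G * Dx / D) + 2 * (h * (Fy - 2 / 3 * F * Dy / D))
      = 2 * A3 * (E * h) - (4/3) * A1 * (G * h) + (2/3) * A2 * (F * h) := by
  subst h0 h1 h2 h3 hDx hDy
  refine ⟨?_, ?_, ?_, ?_⟩ <;>
  · field_simp
    subst hD
    ring

/-- **Liouville's Lemma.** A projective structure `(A₀,A₁,A₂,A₃)` is metrisable near `p`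
iff the Liouville linear system admits a solution `(ψ₁,ψ₂,ψ₃)` near `p` which is
nondegenerate at `p`; moreover any nondegenerate solution yields a metric via
`E = ψ₁/Δ², F = ψ₂/Δ², G = ψ₃/Δ²` with `Δ = ψ₁ψ₃ − ψ₂²`. -/
theorem liouville_lemma (U : Set (ℝ × ℝ)) (hU : IsOpen U) (hUconn : IsConnected U)
    (A0 A1 A2 A3 : ℝ × ℝ → ℝ)
    (hA0 : ContDiffOn ℝ (⊤ : ℕ∞) A0 U) (hA1 : ContDiffOn ℝ (⊤ : ℕ∞) A1 U)
    (hA2 : ContDiffOn ℝ (⊤ : ℕ∞) A2 U) (hA3 : ContDiffOn ℝ (⊤ : ℕ∞) A3 U)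
    (p : ℝ × ℝ) (hp : p ∈ U) :
    (MetrisableNear U A0 A1 A2 A3 p ↔
      ∃ V : Set (ℝ × ℝ), IsOpen V ∧ p ∈ V ∧ V ⊆ U ∧
        ∃ ψ1 ψ2 ψ3 : ℝ × ℝ → ℝ,
          ContDiffOn ℝ (⊤ : ℕ∞) ψ1 V ∧ ContDiffOn ℝ (⊤ : ℕ∞) ψ2 V ∧ ContDiffOn ℝ (⊤ : ℕ∞) ψ3 V ∧
          LiouvilleSystem V A0 A1 A2 A3 ψ1 ψ2 ψ3 ∧
          ψ1 p * ψ3 p - (ψ2 p) ^ 2 ≠ 0)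
    ∧
    (∀ V : Set (ℝ × ℝ), IsOpen V → V ⊆ U →
      ∀ ψ1 ψ2 ψ3 : ℝ × ℝ → ℝ,
        ContDiffOn ℝ (⊤ : ℕ∞) ψ1 V → ContDiffOn ℝ (⊤ : ℕ∞) ψ2 V → ContDiffOn ℝ (⊤ : ℕ∞) ψ3 V →
        LiouvilleSystem V A0 A1 A2 A3 ψ1 ψ2 ψ3 →
        ∀ q ∈ V, ψ1 q * ψ3 q - (ψ2 q) ^ 2 ≠ 0 →
          (let Δ : ℝ × ℝ → ℝ := fun r => ψ1 r * ψ3 r - (ψ2 r) ^ 2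
           let E : ℝ × ℝ → ℝ := fun r => ψ1 r / (Δ r) ^ 2
           let F : ℝ × ℝ → ℝ := fun r => ψ2 r / (Δ r) ^ 2
           let G : ℝ × ℝ → ℝ := fun r => ψ3 r / (Δ r) ^ 2
           E q * G q - (F q) ^ 2 ≠ 0 ∧
           A0 q = (E q * pdy E q - 2 * E q * pdx F q + F q * pdx E q)
                    / (2 * (E q * G q - (F q) ^ 2)) ∧
           A1 q = (3 * F q * pdy E q + G q * pdx E q - 2 * F q * pdx F q - 2 * E q * pdx G q)
                    / (2 * (E q * G q - (F q) ^ 2)) ∧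
           A2 q = (2 * F q * pdy F q + 2 * G q * pdy E q - 3 * F q * pdx G q - E q * pdy G q)
                    / (2 * (E q * G q - (F q) ^ 2)) ∧
           A3 q = (2 * G q * pdy F q - G q * pdx G q - F q * pdy G q)
                    / (2 * (E q * G q - (F q) ^ 2)))) := by
  have key : ∀ V : Set (ℝ × ℝ), IsOpen V → ∀ ψ1 ψ2 ψ3 : ℝ × ℝ → ℝ,
      ContDiffOn ℝ (⊤ : ℕ∞) ψ1 V → ContDiffOn ℝ (⊤ : ℕ∞) ψ2 V → ContDiffOn ℝ (⊤ : ℕ∞) ψ3 V →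
      LiouvilleSystem V A0 A1 A2 A3 ψ1 ψ2 ψ3 →
      ∀ q ∈ V, ψ1 q * ψ3 q - (ψ2 q) ^ 2 ≠ 0 →
          (let Δ : ℝ × ℝ → ℝ := fun r => ψ1 r * ψ3 r - (ψ2 r) ^ 2
           let E : ℝ × ℝ → ℝ := fun r => ψ1 r / (Δ r) ^ 2
           let F : ℝ × ℝ → ℝ := fun r => ψ2 r / (Δ r) ^ 2
           let G : ℝ × ℝ → ℝ := fun r => ψ3 r / (Δ r) ^ 2
           E q * G q - (F q) ^ 2 ≠ 0 ∧
           A0 q = (E q * pdy E q - 2 * E q * pdx F q + F q * pdx E q)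
                    / (2 * (E q * G q - (F q) ^ 2)) ∧
           A1 q = (3 * F q * pdy E q + G q * pdx E q - 2 * F q * pdx F q - 2 * E q * pdx G q)
                    / (2 * (E q * G q - (F q) ^ 2)) ∧
           A2 q = (2 * F q * pdy F q + 2 * G q * pdy E q - 3 * F q * pdx G q - E q * pdy G q)
                    / (2 * (E q * G q - (F q) ^ 2)) ∧
           A3 q = (2 * G q * pdy F q - G q * pdx G q - F q * pdy G q)
                    / (2 * (E q * G q - (F q) ^ 2))) :=
    fun V hV ψ1 ψ2 ψ3 s1 s2 s3 hL q hq hne =>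
      have x1 := hasDerivAt_pdx hV s1 hq
      have x2 := hasDerivAt_pdx hV s2 hq
      have x3 := hasDerivAt_pdx hV s3 hq
      have y1 := hasDerivAt_pdy hV s1 hq
      have y2 := hasDerivAt_pdy hV s2 hq
      have y3 := hasDerivAt_pdy hV s3 hq
      metric_of_solution_algebra hne (hL q hq).1 (hL q hq).2.1 (hL q hq).2.2.1 (hL q hq).2.2.2
        rfl rfl rfl rfl
        (hasDerivAt_div_disc_sq x1 x1 x2 x3 hne).deriv
        (hasDerivAt_div_disc_sq x2 x1 x2 x3 hne).deriv
        (hasDerivAt_div_disc_sq x3 x1 x2 x3 hne).deriv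
        (hasDerivAt_div_disc_sq y1 y1 y2 y3 hne).deriv
        (hasDerivAt_div_disc_sq y2 y1 y2 y3 hne).deriv
        (hasDerivAt_div_disc_sq y3 y1 y2 y3 hne).deriv
  refine ⟨⟨?_, ?_⟩, fun V hV _ ψ1 ψ2 ψ3 s1 s2 s3 hL q hq hne =>
    key V hV ψ1 ψ2 ψ3 s1 s2 s3 hL q hq hne⟩
  · rintro ⟨V, hV, hpV, hVU, E, F, G, sE, sF, sG, hne, hA⟩
    have sh : ContDiffOn ℝ (⊤ : ℕ∞)
        (fun q => ((E q * G q - F q ^ 2) ^ 2) ^ (-1 / 3 : ℝ)) V :=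
      (((sE.mul sG).sub (sF.pow 2)).pow 2).rpow_const_of_ne fun q hq => pow_ne_zero 2 (hne q hq)
    refine ⟨V, hV, hpV, hVU,
      fun q => E q * ((E q * G q - F q ^ 2) ^ 2) ^ (-1 / 3 : ℝ),
      fun q => F q * ((E q * G q - F q ^ 2) ^ 2) ^ (-1 / 3 : ℝ),
      fun q => G q * ((E q * G q - F q ^ 2) ^ 2) ^ (-1 / 3 : ℝ),
      sE.mul sh, sF.mul sh, sG.mul sh, ?_, ?_⟩
    · intro q hq
      have x1 := hasDerivAt_pdx hV sE hq
      have x2 := hasDerivAt_pdx hV sF hq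
      have x3 := hasDerivAt_pdx hV sG hq
      have y1 := hasDerivAt_pdy hV sE hq
      have y2 := hasDerivAt_pdy hV sF hq
      have y3 := hasDerivAt_pdy hV sG hq
      have hq0 := hne q hq
      obtain ⟨h0, h1, h2, h3⟩ := hA q hq
      simp only [pdx, pdy] at *
      rw [(hasDerivAt_mul_disc_rpow x1 x1 x2 x3 hq0).deriv,
        (hasDerivAt_mul_disc_rpow x2 x1 x2 x3 hq0).deriv,
        (hasDerivAt_mul_disc_rpow x3 x1 x2 x3 hq0).deriv,
        (hasDerivAt_mul_disc_rpow y1 y1 y2 y3 hq0).deriv,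
        (hasDerivAt_mul_disc_rpow y2 y1 y2 y3 hq0).deriv,
        (hasDerivAt_mul_disc_rpow y3 y1 y2 y3 hq0).deriv]
      exact solution_of_metric_algebra hq0 rfl rfl rfl h0 h1 h2 h3
    · have hp0 := hne p hpV
      have hpos : 0 < ((E p * G p - F p ^ 2) ^ 2) ^ (-1 / 3 : ℝ) :=
        Real.rpow_pos_of_pos (by positivity) _
      intro h
      refine mul_ne_zero hp0 (pow_ne_zero 2 hpos.ne') ?_
      linear_combination h
  · rintro ⟨V, hV, hpV, hVU, ψ1, ψ2, ψ3, s1, s2, s3, hL, hne⟩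
    have sΔ : ContDiffOn ℝ (⊤ : ℕ∞) (fun q => ψ1 q * ψ3 q - ψ2 q ^ 2) V :=
      (s1.mul s3).sub (s2.pow 2)
    have hsub : V ∩ (fun q => ψ1 q * ψ3 q - ψ2 q ^ 2) ⁻¹' {0}ᶜ ⊆ V := Set.inter_subset_left
    have smooth : ∀ f : ℝ × ℝ → ℝ, ContDiffOn ℝ (⊤ : ℕ∞) f V →
        ContDiffOn ℝ (⊤ : ℕ∞) (fun q => f q / (ψ1 q * ψ3 q - ψ2 q ^ 2) ^ 2)
          (V ∩ (fun q => ψ1 q * ψ3 q - ψ2 q ^ 2) ⁻¹' {0}ᶜ) := fun f hf =>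
      (hf.mono hsub).div ((sΔ.mono hsub).pow 2) fun q hq => pow_ne_zero 2 hq.2
    exact ⟨V ∩ (fun q => ψ1 q * ψ3 q - ψ2 q ^ 2) ⁻¹' {0}ᶜ,
      sΔ.continuousOn.isOpen_inter_preimage hV isOpen_compl_singleton, ⟨hpV, hne⟩,
      hsub.trans hVU, _, _, _, smooth ψ1 s1, smooth ψ2 s2, smooth ψ3 s3,
      fun q hq => (key V hV ψ1 ψ2 ψ3 s1 s2 s3 hL q hq.1 hq.2).1,
      fun q hq => (key V hV ψ1 ψ2 ψ3 s1 s2 s3 hL q hq.1 hq.2).2⟩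
end

section
/- If ψ₁, ψ₂, ψ₃ : U → ℝ are C³ functions solving the Liouville linear system (with A₀, A₁, A₂, A₃ of class C³), then the linear compatibility condition V₁ψ₁ + V₂ψ₂ + V₃ψ₃ − 10 L₂ ∂ₓψ₂ − 10 L₁ ∂_yψ₂ = 0 holds identically on U. -/
noncomputable section

/-- Liouville's first projective invariant `L₁`. -/
def Lio1 (A0 A1 A2 A3 : ℝ × ℝ → ℝ) : ℝ × ℝ → ℝ := fun p =>
  (2/3) * pdx (pdy A1) p - (1/3) * pdx (pdx A2) p - pdy (pdy A0) p
    + A0 p * pdy A2 p + A2 p * pdy A0 p - A3 p * pdx A0 p - 2 * A0 p * pdx A3 p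
    - (2/3) * A1 p * pdy A1 p + (1/3) * A1 p * pdx A2 p

/-- Liouville's second projective invariant `L₂`. -/
def Lio2 (A0 A1 A2 A3 : ℝ × ℝ → ℝ) : ℝ × ℝ → ℝ := fun p =>
  (2/3) * pdx (pdy A2) p - (1/3) * pdy (pdy A1) p - pdx (pdx A3) p
    - A3 p * pdx A1 p - A1 p * pdx A3 p + A0 p * pdy A3 p + 2 * A3 p * pdy A0 p
    + (2/3) * A2 p * pdx A2 p - (1/3) * A2 p * pdy A1 p

/-- The row vector `V = (V₁,…,V₆)`. -/
def Vrow (A0 A1 A2 A3 : ℝ × ℝ → ℝ) : ℝ × ℝ → Fin 6 → ℝ := fun p =>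
  ![2 * pdy (Lio2 A0 A1 A2 A3) p + 4 * A2 p * Lio2 A0 A1 A2 A3 p
      + 8 * A3 p * Lio1 A0 A1 A2 A3 p,
    -2 * pdy (Lio1 A0 A1 A2 A3) p - 2 * pdx (Lio2 A0 A1 A2 A3) p
      - (4/3) * A1 p * Lio2 A0 A1 A2 A3 p + (4/3) * A2 p * Lio1 A0 A1 A2 A3 p,
    2 * pdx (Lio1 A0 A1 A2 A3) p - 8 * A0 p * Lio2 A0 A1 A2 A3 p
      - 4 * A1 p * Lio1 A0 A1 A2 A3 p,
    -5 * Lio2 A0 A1 A2 A3 p,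
    -5 * Lio1 A0 A1 A2 A3 p,
    0]


end

/-- On `U`, the function `f` is (Fréchet) differentiable with partial derivatives `F` in `x` and
`G` in `y`. -/
def HasPartials (U : Set (ℝ × ℝ)) (f F G : ℝ × ℝ → ℝ) : Prop :=
  ∀ p ∈ U, HasFDerivAt f
    (F p • ContinuousLinearMap.fst ℝ ℝ ℝ + G p • ContinuousLinearMap.snd ℝ ℝ ℝ) p

namespace HasPartials

variable {U : Set (ℝ × ℝ)} {f g F G F' G' : ℝ × ℝ → ℝ}

theorem add (hf : HasPartials U f F G) (hg : HasPartials U g F' G') :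
    HasPartials U (f + g) (F + F') (G + G') := fun p hp => by
  refine ((hf p hp).add (hg p hp)).congr_fderiv ?_
  ext <;> simp

theorem sub (hf : HasPartials U f F G) (hg : HasPartials U g F' G') :
    HasPartials U (f - g) (F - F') (G - G') := fun p hp => by
  refine ((hf p hp).sub (hg p hp)).congr_fderiv ?_
  ext <;> simp

theorem smul (c : ℝ) (hf : HasPartials U f F G) :
    HasPartials U (c • f) (c • F) (c • G) := fun p hp => by
  refine ((hf p hp).const_smul c).congr_fderiv ?_
  ext <;> simp

theorem mul (hf : HasPartials U f F G) (hg : HasPartials U g F' G') :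
    HasPartials U (f * g) (f * F' + g * F) (f * G' + g * G) := fun p hp => by
  refine ((hf p hp).mul (hg p hp)).congr_fderiv ?_
  ext <;> simp

theorem congr (hf : HasPartials U f F G) (hF : ∀ p ∈ U, F p = F' p) (hG : ∀ p ∈ U, G p = G' p) :
    HasPartials U f F' G' := fun p hp => by
  rw [← hF p hp, ← hG p hp]
  exact hf p hp

theorem pdx_eq (hf : HasPartials U f F G) {p : ℝ × ℝ} (hp : p ∈ U) : pdx f p = F p := by
  have h : HasDerivAt (fun t : ℝ => (t, p.2)) ((1 : ℝ), (0 : ℝ)) p.1 :=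
    (hasDerivAt_id _).prodMk (hasDerivAt_const _ _)
  have : pdx f p = _ := (HasFDerivAt.comp_hasDerivAt p.1 (hf p hp) h).deriv
  simpa using this

theorem pdy_eq (hf : HasPartials U f F G) {p : ℝ × ℝ} (hp : p ∈ U) : pdy f p = G p := by
  have h : HasDerivAt (fun t : ℝ => (p.1, t)) ((0 : ℝ), (1 : ℝ)) p.2 :=
    (hasDerivAt_const _ _).prodMk (hasDerivAt_id _)
  have : pdy f p = _ := (HasFDerivAt.comp_hasDerivAt p.2 (hf p hp) h).deriv
  simpa using this

/-- Symmetry of mixed second derivatives, without continuity of the second derivatives. -/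
theorem cross {F₁ F₂ G₁ G₂ : ℝ × ℝ → ℝ} (hU : IsOpen U) (hf : HasPartials U f F G)
    (hF : HasPartials U F F₁ F₂) (hG : HasPartials U G G₁ G₂) : ∀ p ∈ U, F₂ p = G₁ p := by
  intro p hp
  have hev : ∀ᶠ q in nhds p, HasFDerivAt f
      (F q • ContinuousLinearMap.fst ℝ ℝ ℝ + G q • ContinuousLinearMap.snd ℝ ℝ ℝ) q := by
    filter_upwards [hU.mem_nhds hp] with q hq using hf q hq
  have h2 := ((hF p hp).smul_const (ContinuousLinearMap.fst ℝ ℝ ℝ)).add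
    ((hG p hp).smul_const (ContinuousLinearMap.snd ℝ ℝ ℝ))
  have := second_derivative_symmetric_of_eventually hev h2 (0, 1) (1, 0)
  simpa using this

theorem of_contDiffOn {n : ℕ} (hU : IsOpen U) (hf : ContDiffOn ℝ (n + 1) f U) :
    HasPartials U f (pdx f) (pdy f) ∧ ContDiffOn ℝ n (pdx f) U ∧ ContDiffOn ℝ n (pdy f) U := by
  have h0 : HasPartials U f (fun q => fderiv ℝ f q (1, 0)) (fun q => fderiv ℝ f q (0, 1)) := by
    intro p hp
    have hd : DifferentiableAt ℝ f p :=
      (hf.differentiableOn (by simp)).differentiableAt (hU.mem_nhds hp)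
    refine hd.hasFDerivAt.congr_fderiv ?_
    ext <;> simp
  have h1 : ContDiffOn ℝ n (fderiv ℝ f) U := hf.fderiv_of_isOpen hU le_rfl
  exact ⟨h0.congr (fun p hp => (h0.pdx_eq hp).symm) (fun p hp => (h0.pdy_eq hp).symm),
    (h1.clm_apply contDiffOn_const).congr fun p hp => h0.pdx_eq hp,
    (h1.clm_apply contDiffOn_const).congr fun p hp => h0.pdy_eq hp⟩

theorem jet_two (hU : IsOpen U) (hf : ContDiffOn ℝ 2 f U) :
    HasPartials U f (pdx f) (pdy f) ∧ HasPartials U (pdx f) (pdx (pdx f)) (pdx (pdy f)) ∧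
      HasPartials U (pdy f) (pdx (pdy f)) (pdy (pdy f)) := by
  obtain ⟨h, hx, hy⟩ := of_contDiffOn (n := 1) hU (by exact_mod_cast hf)
  obtain ⟨h1, -, -⟩ := of_contDiffOn (n := 0) hU (by simpa using hx)
  obtain ⟨h2, -, -⟩ := of_contDiffOn (n := 0) hU (by simpa using hy)
  exact ⟨h, h1.congr (fun _ _ => rfl) (cross hU h h1 h2), h2⟩

/-- Partial derivatives of a `C³` function up to order three, those of order two written with `∂ₓ`
outermost and those of order three identified by symmetry. -/
theorem jet_three (hU : IsOpen U) (hf : ContDiffOn ℝ 3 f U) :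
    ∃ fxxx fxxy fxyy fyyy : ℝ × ℝ → ℝ,
      HasPartials U f (pdx f) (pdy f) ∧ HasPartials U (pdx f) (pdx (pdx f)) (pdx (pdy f)) ∧
      HasPartials U (pdy f) (pdx (pdy f)) (pdy (pdy f)) ∧
      HasPartials U (pdx (pdx f)) fxxx fxxy ∧ HasPartials U (pdx (pdy f)) fxxy fxyy ∧
      HasPartials U (pdy (pdy f)) fxyy fyyy := by
  obtain ⟨h, h1, h2⟩ := jet_two hU (hf.of_le (by norm_num))
  obtain ⟨-, hx, hy⟩ := of_contDiffOn (n := 2) hU (by exact_mod_cast hf)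
  obtain ⟨-, hxx, -⟩ := of_contDiffOn (n := 1) hU (by exact_mod_cast hx)
  obtain ⟨-, hxy, hyy⟩ := of_contDiffOn (n := 1) hU (by exact_mod_cast hy)
  obtain ⟨k1, -, -⟩ := of_contDiffOn (n := 0) hU (by simpa using hxx)
  obtain ⟨k2, -, -⟩ := of_contDiffOn (n := 0) hU (by simpa using hxy)
  obtain ⟨k3, -, -⟩ := of_contDiffOn (n := 0) hU (by simpa using hyy)
  exact ⟨_, _, _, _, h, h1, h2, k1.congr (fun _ _ => rfl) (cross hU h1 k1 k2),
    k2.congr (fun _ _ => rfl) (cross hU h2 k2 k3), k3⟩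

theorem solve_half (h : ∀ p ∈ U, F p = (G - (2 : ℝ) • f) p) :
    ∀ p ∈ U, f p = ((1/2 : ℝ) • (G - F)) p := fun p hp => by
  have := h p hp
  simp only [Pi.sub_apply, Pi.smul_apply, smul_eq_mul] at this ⊢
  linarith

end HasPartials

/-- If `(ψ₁,ψ₂,ψ₃)` is a `C³` solution of the Liouville linear system (with `C³`
coefficients), then `V₁ψ₁ + V₂ψ₂ + V₃ψ₃ − 10L₂∂ₓψ₂ − 10L₁∂_yψ₂ = 0` identically on `U`. -/
theorem liouville_compatibility (U : Set (ℝ × ℝ)) (hU : IsOpen U) (hUconn : IsConnected U)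
    (A0 A1 A2 A3 : ℝ × ℝ → ℝ)
    (hA0 : ContDiffOn ℝ 3 A0 U) (hA1 : ContDiffOn ℝ 3 A1 U)
    (hA2 : ContDiffOn ℝ 3 A2 U) (hA3 : ContDiffOn ℝ 3 A3 U)
    (ψ1 ψ2 ψ3 : ℝ × ℝ → ℝ)
    (hψ1 : ContDiffOn ℝ 3 ψ1 U) (hψ2 : ContDiffOn ℝ 3 ψ2 U) (hψ3 : ContDiffOn ℝ 3 ψ3 U)
    (hsys : LiouvilleSystem U A0 A1 A2 A3 ψ1 ψ2 ψ3) :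
    ∀ p ∈ U,
      Vrow A0 A1 A2 A3 p 0 * ψ1 p + Vrow A0 A1 A2 A3 p 1 * ψ2 p
        + Vrow A0 A1 A2 A3 p 2 * ψ3 p
        - 10 * Lio2 A0 A1 A2 A3 p * pdx ψ2 p
        - 10 * Lio1 A0 A1 A2 A3 p * pdy ψ2 p = 0 := by
  intro p hp
  obtain ⟨_, _, _, _, a0, a0x, a0y, a0xx, a0xy, a0yy⟩ := HasPartials.jet_three hU hA0
  obtain ⟨_, _, _, _, a1, a1x, a1y, a1xx, a1xy, a1yy⟩ := HasPartials.jet_three hU hA1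
  obtain ⟨_, _, _, _, a2, a2x, a2y, a2xx, a2xy, a2yy⟩ := HasPartials.jet_three hU hA2
  obtain ⟨_, _, _, _, a3, a3x, a3y, a3xx, a3xy, a3yy⟩ := HasPartials.jet_three hU hA3
  obtain ⟨_, _, _, _, s2, s2x, s2y, -, s2xy, -⟩ := HasPartials.jet_three hU hψ2
  obtain ⟨s1', -, -⟩ := HasPartials.jet_two hU (hψ1.of_le (by norm_num))
  obtain ⟨s3', -, -⟩ := HasPartials.jet_two hU (hψ3.of_le (by norm_num))
  -- The system, solved for the first derivatives of `ψ1` and `ψ3`.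
  have s1 : HasPartials U ψ1 ((2/3 : ℝ) • (A1 * ψ1) - (2 : ℝ) • (A0 * ψ2))
      ((4/3 : ℝ) • (A2 * ψ1) - (2/3 : ℝ) • (A1 * ψ2) - (2 : ℝ) • (A0 * ψ3)
        - (2 : ℝ) • pdx ψ2) := by
    refine s1'.congr (fun q hq => ?_) (fun q hq => ?_) <;>
      obtain ⟨e1, e2, e3, e4⟩ := hsys q hq <;>
      simp only [Pi.sub_apply, Pi.smul_apply, Pi.mul_apply, smul_eq_mul] <;> linarith
  have s3 : HasPartials U ψ3
      ((2 : ℝ) • (A3 * ψ1) - (4/3 : ℝ) • (A1 * ψ3) + (2/3 : ℝ) • (A2 * ψ2) - (2 : ℝ) • pdy ψ2)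
      ((2 : ℝ) • (A3 * ψ2) - (2/3 : ℝ) • (A2 * ψ3)) := by
    refine s3'.congr (fun q hq => ?_) (fun q hq => ?_) <;>
      obtain ⟨e1, e2, e3, e4⟩ := hsys q hq <;>
      simp only [Pi.add_apply, Pi.sub_apply, Pi.smul_apply, Pi.mul_apply, smul_eq_mul] <;> linarith
  -- Mixed derivatives of `ψ1` and of `ψ3` determine `∂ₓ∂ₓψ2` and `∂_y∂_yψ2`.
  have r1 := ((a1.mul s1).smul (2/3)).sub ((a0.mul s2).smul 2)
  have r3 := (((a2.mul s1).smul (4/3)).sub ((a1.mul s2).smul (2/3))).sub ((a0.mul s3).smul 2)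
  have r4 := (((a3.mul s1).smul 2).sub ((a1.mul s3).smul (4/3))).add ((a2.mul s2).smul (2/3))
  have r2 := ((a3.mul s2).smul 2).sub ((a2.mul s3).smul (2/3))
  have c1 := HasPartials.cross hU s1 r1 (r3.sub (s2x.smul 2))
  have c3 := HasPartials.cross hU s3 (r4.sub (s2y.smul 2)) r2
  have t2x := s2x.congr (HasPartials.solve_half c1) (fun _ _ => rfl)
  have t2y := s2y.congr (fun _ _ => rfl) (HasPartials.solve_half fun q hq => (c3 q hq).symm)
  -- Mixed derivatives of `∂ₓψ2` and `∂_yψ2` determine both partials of `w = ∂ₓ∂_yψ2`.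
  clear s1' s3' s2x s2y r1 r2 r3 r4 c1 c3
  have w1 := HasPartials.cross hU t2x (by
    with_reducible repeat' first
      | assumption | apply HasPartials.add | apply HasPartials.sub | apply HasPartials.mul
      | apply HasPartials.smul) s2xy
  have w2 := HasPartials.cross hU t2y s2xy (by
    with_reducible repeat' first
      | assumption | apply HasPartials.add | apply HasPartials.sub | apply HasPartials.mul
      | apply HasPartials.smul)
  have w := s2xy.congr (fun q hq => (w1 q hq).symm) w2
  clear s2xy w1 w2
  have key := HasPartials.cross hU w (by
    with_reducible repeat' first
      | assumption | apply HasPartials.add | apply HasPartials.sub | apply HasPartials.mul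
      | apply HasPartials.smul) (by
    with_reducible repeat' first
      | assumption | apply HasPartials.add | apply HasPartials.sub | apply HasPartials.mul
      | apply HasPartials.smul) p hp
  have eL1 : Lio1 A0 A1 A2 A3 = (2/3 : ℝ) • pdx (pdy A1) - (1/3 : ℝ) • pdx (pdx A2) - pdy (pdy A0)
      + A0 * pdy A2 + A2 * pdy A0 - A3 * pdx A0 - (2 : ℝ) • A0 * pdx A3
      - (2/3 : ℝ) • A1 * pdy A1 + (1/3 : ℝ) • A1 * pdx A2 := rfl
  have eL2 : Lio2 A0 A1 A2 A3 = (2/3 : ℝ) • pdx (pdy A2) - (1/3 : ℝ) • pdy (pdy A1) - pdx (pdx A3)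
      - A3 * pdx A1 - A1 * pdx A3 + A0 * pdy A3 + (2 : ℝ) • A3 * pdy A0
      + (2/3 : ℝ) • A2 * pdx A2 - (1/3 : ℝ) • A2 * pdy A1 := rfl
  have l1x := HasPartials.pdx_eq (f := Lio1 A0 A1 A2 A3) (by
    rw [eL1]
    with_reducible repeat' first
      | assumption | apply HasPartials.add | apply HasPartials.sub | apply HasPartials.mul
      | apply HasPartials.smul) hp
  have l1y := HasPartials.pdy_eq (f := Lio1 A0 A1 A2 A3) (by
    rw [eL1]
    with_reducible repeat' first
      | assumption | apply HasPartials.add | apply HasPartials.sub | apply HasPartials.mul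
      | apply HasPartials.smul) hp
  have l2x := HasPartials.pdx_eq (f := Lio2 A0 A1 A2 A3) (by
    rw [eL2]
    with_reducible repeat' first
      | assumption | apply HasPartials.add | apply HasPartials.sub | apply HasPartials.mul
      | apply HasPartials.smul) hp
  have l2y := HasPartials.pdy_eq (f := Lio2 A0 A1 A2 A3) (by
    rw [eL2]
    with_reducible repeat' first
      | assumption | apply HasPartials.add | apply HasPartials.sub | apply HasPartials.mul
      | apply HasPartials.smul) hp
  have v0 : Vrow A0 A1 A2 A3 p 0 = 2 * pdy (Lio2 A0 A1 A2 A3) p + 4 * A2 p * Lio2 A0 A1 A2 A3 p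
      + 8 * A3 p * Lio1 A0 A1 A2 A3 p := rfl
  have v1 : Vrow A0 A1 A2 A3 p 1 = -2 * pdy (Lio1 A0 A1 A2 A3) p - 2 * pdx (Lio2 A0 A1 A2 A3) p
      - (4/3) * A1 p * Lio2 A0 A1 A2 A3 p + (4/3) * A2 p * Lio1 A0 A1 A2 A3 p := rfl
  have v2 : Vrow A0 A1 A2 A3 p 2 = 2 * pdx (Lio1 A0 A1 A2 A3) p - 8 * A0 p * Lio2 A0 A1 A2 A3 p
      - 4 * A1 p * Lio1 A0 A1 A2 A3 p := rfl
  rw [v0, v1, v2, l1x, l1y, l2x, l2y, eL1, eL2]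
  simp only [Pi.add_apply, Pi.sub_apply, Pi.smul_apply, Pi.mul_apply, smul_eq_mul] at key ⊢
  linear_combination 2 * key
end

section
/- (Main Theorem) Assume A₀, A₁, A₂, A₃ admit continuous fifth derivatives. If the tuple (A₀,A₁,A₂,A₃) is metrisable near a point p ∈ U, then det M = 0 on a neighbourhood of p. -/
noncomputable section

/-- The connection matrix `Ω₁`. -/
def Om1 (A0 A1 A2 A3 : ℝ × ℝ → ℝ) : ℝ × ℝ → Matrix (Fin 6) (Fin 6) ℝ := fun p =>
  Matrix.of
  ![![-(2/3) * A1 p, 2 * A0 p, 0, 0, 0, 0],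
    ![0, 0, 0, -(1/2 : ℝ), 0, 0],
    ![-2 * A3 p, -(2/3) * A2 p, (4/3) * A1 p, 0, 1, 0],
    ![-(4/3) * pdx A2 p + 4 * A0 p * A3 p + (2/3) * pdy A1 p,
      -2 * pdy A0 p + (2/3) * pdx A1 p + 4 * A2 p * A0 p - (4/9) * (A1 p) ^ 2,
      2 * pdx A0 p - 4 * A0 p * A1 p,
      -(1/3) * A1 p, -3 * A0 p, 0],
    ![0, 0, 0, 0, 0, -1],
    ![-(4/3) * pdx (pdy A2) p - (20/3) * A0 p * A2 p * A3 p + (2/3) * pdy (pdy A1) p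
        + 4 * A3 p * pdy A0 p - 2 * A0 p * pdy A3 p - (16/9) * A2 p * pdx A2 p
        + (8/9) * A2 p * pdy A1 p,
      (2/3) * pdx (pdy A1) p - (4/3) * A1 p * pdy A1 p + 2 * A0 p * pdy A2 p
        - 2 * pdy (pdy A0) p + 4 * A2 p * pdy A0 p + 4 * A3 p * pdx A0 p
        + 6 * A0 p * pdx A3 p + (8/9) * A1 p * pdx A2 p
        + (4/3) * A0 p * A1 p * A3 p - (4/3) * A0 p * (A2 p) ^ 2,
      2 * pdx (pdy A0) p + (2/3) * A0 p * pdx A2 p - (4/3) * A2 p * pdx A0 p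
        - 4 * A1 p * pdy A0 p - (4/3) * A0 p * pdy A1 p
        + (8/3) * A0 p * A1 p * A2 p + 4 * A3 p * (A0 p) ^ 2,
      (4/3) * pdx A2 p - pdy A1 p + 5 * A0 p * A3 p,
      (1/3) * pdx A1 p - 4 * pdy A0 p + 3 * A2 p * A0 p - (2/9) * (A1 p) ^ 2,
      -(1/3) * A1 p]]

/-- The connection matrix `Ω₂`. -/
def Om2 (A0 A1 A2 A3 : ℝ × ℝ → ℝ) : ℝ × ℝ → Matrix (Fin 6) (Fin 6) ℝ := fun p =>
  Matrix.of
  ![![-(4/3) * A2 p, (2/3) * A1 p, 2 * A0 p, 1, 0, 0],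
    ![0, 0, 0, 0, -(1/2 : ℝ), 0],
    ![0, -2 * A3 p, (2/3) * A2 p, 0, 0, 0],
    ![0, 0, 0, 0, 0, -1],
    ![-2 * pdy A3 p - 4 * A3 p * A2 p,
      2 * pdx A3 p - (2/3) * pdy A2 p + 4 * A1 p * A3 p - (4/9) * (A2 p) ^ 2,
      (4/3) * pdy A1 p - (2/3) * pdx A2 p + 4 * A0 p * A3 p,
      3 * A3 p, (1/3) * A2 p, 0],
    ![-2 * pdx (pdy A3) p - 4 * A2 p * pdx A3 p - (4/3) * A3 p * pdx A2 p
        + (2/3) * A3 p * pdy A1 p - (4/3) * A1 p * pdy A3 p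
        - 4 * A0 p * (A3 p) ^ 2 - (8/3) * A1 p * A2 p * A3 p,
      2 * pdx (pdx A3) p - (4/3) * A2 p * pdx A2 p - (4/3) * A0 p * A2 p * A3 p
        - (2/3) * pdx (pdy A2) p + 4 * A1 p * pdx A3 p + 4 * A0 p * pdy A3 p
        + 6 * A3 p * pdy A0 p + (4/3) * A3 p * (A1 p) ^ 2 + 2 * A3 p * pdx A1 p
        + (8/9) * A2 p * pdy A1 p,
      -(2/3) * pdx (pdx A2) p + (8/9) * A1 p * pdx A2 p + 4 * A0 p * pdx A3 p
        - 2 * A3 p * pdx A0 p - (16/9) * A1 p * pdy A1 p + (4/3) * pdx (pdy A1) p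
        + (20/3) * A0 p * A1 p * A3 p,
      4 * pdx A3 p - (1/3) * pdy A2 p + 3 * A1 p * A3 p - (2/9) * (A2 p) ^ 2,
      pdx A2 p - (4/3) * pdy A1 p + 5 * A0 p * A3 p,
      (1/3) * A2 p]]

/-- `Ω` indexed by a direction. -/
def Om (A0 A1 A2 A3 : ℝ × ℝ → ℝ) : Fin 2 → ℝ × ℝ → Matrix (Fin 6) (Fin 6) ℝ :=
  ![Om1 A0 A1 A2 A3, Om2 A0 A1 A2 A3]

/-- The operator `D_a W = ∂_a W − W·Ω_a` on row-vector-valued functions. -/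
def Dop (A0 A1 A2 A3 : ℝ × ℝ → ℝ) (a : Fin 2) (W : ℝ × ℝ → Fin 6 → ℝ) :
    ℝ × ℝ → Fin 6 → ℝ := fun p =>
  (fun i => pd a (fun q => W q i) p) - Matrix.vecMul (W p) (Om A0 A1 A2 A3 a p)

/-- Iterated derivative `D_{a₁} ⋯ D_{a_j} W` (the head of the list acts last/outermost). -/
def DIter (A0 A1 A2 A3 : ℝ × ℝ → ℝ) (l : List (Fin 2)) (W : ℝ × ℝ → Fin 6 → ℝ) :
    ℝ × ℝ → Fin 6 → ℝ :=
  l.foldr (Dop A0 A1 A2 A3) W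

/-- Symmetrised iterated derivative `D_{(a₁} ⋯ D_{a_j)} V` of the vector `V`. -/
def DSym (A0 A1 A2 A3 : ℝ × ℝ → ℝ) (l : List (Fin 2)) : ℝ × ℝ → Fin 6 → ℝ := fun p =>
  ((l.permutations.length : ℝ))⁻¹ •
    (l.permutations.map (fun m => DIter A0 A1 A2 A3 m (Vrow A0 A1 A2 A3) p)).sum

/-- The `6 × 6` matrix `M([Γ])` with rows `V, D₁V, D₂V, D₁D₁V, (1/2)(D₁D₂V + D₂D₁V), D₂D₂V`. -/
def Mmat (A0 A1 A2 A3 : ℝ × ℝ → ℝ) : ℝ × ℝ → Matrix (Fin 6) (Fin 6) ℝ := fun p =>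
  Matrix.of
  ![Vrow A0 A1 A2 A3 p,
    DIter A0 A1 A2 A3 [0] (Vrow A0 A1 A2 A3) p,
    DIter A0 A1 A2 A3 [1] (Vrow A0 A1 A2 A3) p,
    DIter A0 A1 A2 A3 [0, 0] (Vrow A0 A1 A2 A3) p,
    (1/2 : ℝ) • (DIter A0 A1 A2 A3 [0, 1] (Vrow A0 A1 A2 A3) p
      + DIter A0 A1 A2 A3 [1, 0] (Vrow A0 A1 A2 A3) p),
    DIter A0 A1 A2 A3 [1, 1] (Vrow A0 A1 A2 A3) p]

end

open scoped ContDiff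

/-! ### Calculus of the partial derivatives on an open set -/

lemma pdx_eq_fderiv {f : ℝ × ℝ → ℝ} {q : ℝ × ℝ} (hf : DifferentiableAt ℝ f q) :
    pdx f q = fderiv ℝ f q (1, 0) := by
  have h : HasDerivAt (fun t : ℝ => (t, q.2)) ((1 : ℝ), (0 : ℝ)) q.1 :=
    (hasDerivAt_id _).prodMk (hasDerivAt_const _ _)
  exact (HasFDerivAt.comp_hasDerivAt q.1 (f := fun t : ℝ => (t, q.2)) hf.hasFDerivAt h).deriv

lemma pdy_eq_fderiv {f : ℝ × ℝ → ℝ} {q : ℝ × ℝ} (hf : DifferentiableAt ℝ f q) :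
    pdy f q = fderiv ℝ f q (0, 1) := by
  have h : HasDerivAt (fun t : ℝ => (q.1, t)) ((0 : ℝ), (1 : ℝ)) q.2 :=
    (hasDerivAt_const _ _).prodMk (hasDerivAt_id _)
  exact (HasFDerivAt.comp_hasDerivAt q.2 (f := fun t : ℝ => (q.1, t)) hf.hasFDerivAt h).deriv

lemma pdx_congr {V : Set (ℝ × ℝ)} (hV : IsOpen V) {f g : ℝ × ℝ → ℝ}
    (h : ∀ q ∈ V, f q = g q) {q : ℝ × ℝ} (hq : q ∈ V) : pdx f q = pdx g q := by
  apply Filter.EventuallyEq.deriv_eq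
  have hc : ContinuousAt (fun t : ℝ => (t, q.2)) q.1 := by fun_prop
  filter_upwards [hc (hV.mem_nhds hq)] with t ht using h _ ht

lemma pdy_congr {V : Set (ℝ × ℝ)} (hV : IsOpen V) {f g : ℝ × ℝ → ℝ}
    (h : ∀ q ∈ V, f q = g q) {q : ℝ × ℝ} (hq : q ∈ V) : pdy f q = pdy g q := by
  apply Filter.EventuallyEq.deriv_eq
  have hc : ContinuousAt (fun t : ℝ => (q.1, t)) q.2 := by fun_prop
  filter_upwards [hc (hV.mem_nhds hq)] with t ht using h _ ht

lemma smooth_diff {V : Set (ℝ × ℝ)} (hV : IsOpen V) {f : ℝ × ℝ → ℝ}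
    (hf : ContDiffOn ℝ ∞ f V) {q : ℝ × ℝ} (hq : q ∈ V) : DifferentiableAt ℝ f q :=
  (hf.contDiffAt (hV.mem_nhds hq)).differentiableAt (by simp)

lemma smooth_pdx {V : Set (ℝ × ℝ)} (hV : IsOpen V) {f : ℝ × ℝ → ℝ}
    (hf : ContDiffOn ℝ ∞ f V) : ContDiffOn ℝ ∞ (pdx f) V :=
  ((hf.fderiv_of_isOpen hV (m := ∞) (by simp)).clm_apply contDiffOn_const).congr
    fun _ hq => pdx_eq_fderiv (smooth_diff hV hf hq)

lemma smooth_pdy {V : Set (ℝ × ℝ)} (hV : IsOpen V) {f : ℝ × ℝ → ℝ}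
    (hf : ContDiffOn ℝ ∞ f V) : ContDiffOn ℝ ∞ (pdy f) V :=
  ((hf.fderiv_of_isOpen hV (m := ∞) (by simp)).clm_apply contDiffOn_const).congr
    fun _ hq => pdy_eq_fderiv (smooth_diff hV hf hq)

lemma pdy_pdx {V : Set (ℝ × ℝ)} (hV : IsOpen V) {f : ℝ × ℝ → ℝ}
    (hf : ContDiffOn ℝ ∞ f V) {q : ℝ × ℝ} (hq : q ∈ V) : pdy (pdx f) q = pdx (pdy f) q := by
  have hd : DifferentiableAt ℝ (fderiv ℝ f) q :=
    ((hf.fderiv_of_isOpen hV (m := ∞) (by simp)).contDiffAt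
      (hV.mem_nhds hq)).differentiableAt (by simp)
  have hs : IsSymmSndFDerivAt ℝ f q :=
    (hf.contDiffAt (hV.mem_nhds hq)).isSymmSndFDerivAt
      (by simpa using (WithTop.coe_le_coe.2 le_top : ((2 : ℕ∞) : WithTop ℕ∞) ≤ ∞))
  have h1 : pdy (pdx f) q = fderiv ℝ (fderiv ℝ f) q (0, 1) (1, 0) := by
    rw [pdy_congr hV (fun p hp => pdx_eq_fderiv (smooth_diff hV hf hp)) hq,
      pdy_eq_fderiv (hd.clm_apply (differentiableAt_const _)), fderiv_clm_apply hd
        (differentiableAt_const _)]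
    simp
  have h2 : pdx (pdy f) q = fderiv ℝ (fderiv ℝ f) q (1, 0) (0, 1) := by
    rw [pdx_congr hV (fun p hp => pdy_eq_fderiv (smooth_diff hV hf hp)) hq,
      pdx_eq_fderiv (hd.clm_apply (differentiableAt_const _)), fderiv_clm_apply hd
        (differentiableAt_const _)]
    simp
  rw [h1, h2]
  exact hs.eq _ _

lemma pdx_add {f g : ℝ × ℝ → ℝ} {q : ℝ × ℝ} (hf : DifferentiableAt ℝ f q)
    (hg : DifferentiableAt ℝ g q) : pdx (fun p => f p + g p) q = pdx f q + pdx g q := by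
  rw [pdx_eq_fderiv (hf.fun_add hg), pdx_eq_fderiv hf, pdx_eq_fderiv hg, fderiv_fun_add hf hg]
  rfl

lemma pdy_add {f g : ℝ × ℝ → ℝ} {q : ℝ × ℝ} (hf : DifferentiableAt ℝ f q)
    (hg : DifferentiableAt ℝ g q) : pdy (fun p => f p + g p) q = pdy f q + pdy g q := by
  rw [pdy_eq_fderiv (hf.fun_add hg), pdy_eq_fderiv hf, pdy_eq_fderiv hg, fderiv_fun_add hf hg]
  rfl

lemma pdx_sub {f g : ℝ × ℝ → ℝ} {q : ℝ × ℝ} (hf : DifferentiableAt ℝ f q)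
    (hg : DifferentiableAt ℝ g q) : pdx (fun p => f p - g p) q = pdx f q - pdx g q := by
  rw [pdx_eq_fderiv (hf.fun_sub hg), pdx_eq_fderiv hf, pdx_eq_fderiv hg, fderiv_fun_sub hf hg]
  rfl

lemma pdy_sub {f g : ℝ × ℝ → ℝ} {q : ℝ × ℝ} (hf : DifferentiableAt ℝ f q)
    (hg : DifferentiableAt ℝ g q) : pdy (fun p => f p - g p) q = pdy f q - pdy g q := by
  rw [pdy_eq_fderiv (hf.fun_sub hg), pdy_eq_fderiv hf, pdy_eq_fderiv hg, fderiv_fun_sub hf hg]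
  rfl

lemma pdx_neg (f : ℝ × ℝ → ℝ) (q : ℝ × ℝ) : pdx (fun p => -f p) q = -pdx f q := by
  simp [pdx]

lemma pdy_neg (f : ℝ × ℝ → ℝ) (q : ℝ × ℝ) : pdy (fun p => -f p) q = -pdy f q := by
  simp [pdy]

lemma pdx_mul {f g : ℝ × ℝ → ℝ} {q : ℝ × ℝ} (hf : DifferentiableAt ℝ f q)
    (hg : DifferentiableAt ℝ g q) :
    pdx (fun p => f p * g p) q = pdx f q * g q + f q * pdx g q := by
  rw [pdx_eq_fderiv (hf.fun_mul hg), pdx_eq_fderiv hf, pdx_eq_fderiv hg, fderiv_fun_mul hf hg]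
  simp
  ring

lemma pdy_mul {f g : ℝ × ℝ → ℝ} {q : ℝ × ℝ} (hf : DifferentiableAt ℝ f q)
    (hg : DifferentiableAt ℝ g q) :
    pdy (fun p => f p * g p) q = pdy f q * g q + f q * pdy g q := by
  rw [pdy_eq_fderiv (hf.fun_mul hg), pdy_eq_fderiv hf, pdy_eq_fderiv hg, fderiv_fun_mul hf hg]
  simp
  ring

lemma pdx_sq {f : ℝ × ℝ → ℝ} {q : ℝ × ℝ} (hf : DifferentiableAt ℝ f q) :
    pdx (fun p => f p ^ 2) q = 2 * f q * pdx f q := by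
  simp only [pow_two, pdx_mul hf hf]
  ring

lemma pdy_sq {f : ℝ × ℝ → ℝ} {q : ℝ × ℝ} (hf : DifferentiableAt ℝ f q) :
    pdy (fun p => f p ^ 2) q = 2 * f q * pdy f q := by
  simp only [pow_two, pdy_mul hf hf]
  ring

lemma pdx_const (c : ℝ) (q : ℝ × ℝ) : pdx (fun _ => c) q = 0 := by simp [pdx]

lemma pdy_const (c : ℝ) (q : ℝ × ℝ) : pdy (fun _ => c) q = 0 := by simp [pdy]

/-! ### Prolongation of Liouville's system -/

/-- The prolonged variables `μ`, `ν`, `ρ` together with the closed first-order relations that follow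
at once from Liouville's system when `μ = 2 ∂ₓψ₂`, `ν = 2 ∂_yψ₂` and `ρ = 2 ∂ₓ∂_yψ₂`. -/
structure Prolonged (V : Set (ℝ × ℝ)) (A0 A1 A2 A3 ψ1 ψ2 ψ3 μ ν ρ : ℝ × ℝ → ℝ) : Prop where
  isOpen : IsOpen V
  sA0 : ContDiffOn ℝ ∞ A0 V
  sA1 : ContDiffOn ℝ ∞ A1 V
  sA2 : ContDiffOn ℝ ∞ A2 V
  sA3 : ContDiffOn ℝ ∞ A3 V
  sψ1 : ContDiffOn ℝ ∞ ψ1 V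
  sψ2 : ContDiffOn ℝ ∞ ψ2 V
  sψ3 : ContDiffOn ℝ ∞ ψ3 V
  sμ : ContDiffOn ℝ ∞ μ V
  sν : ContDiffOn ℝ ∞ ν V
  sρ : ContDiffOn ℝ ∞ ρ V
  ψ1x : ∀ q ∈ V, pdx ψ1 q = (2/3) * A1 q * ψ1 q - 2 * A0 q * ψ2 q
  ψ1y : ∀ q ∈ V, pdy ψ1 q = (4/3) * A2 q * ψ1 q - (2/3) * A1 q * ψ2 q - 2 * A0 q * ψ3 q - μ q
  ψ2x : ∀ q ∈ V, pdx ψ2 q = (1/2) * μ q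
  ψ2y : ∀ q ∈ V, pdy ψ2 q = (1/2) * ν q
  ψ3x : ∀ q ∈ V, pdx ψ3 q = 2 * A3 q * ψ1 q + (2/3) * A2 q * ψ2 q - (4/3) * A1 q * ψ3 q - ν q
  ψ3y : ∀ q ∈ V, pdy ψ3 q = 2 * A3 q * ψ2 q - (2/3) * A2 q * ψ3 q
  μy : ∀ q ∈ V, pdy μ q = ρ q
  νx : ∀ q ∈ V, pdx ν q = ρ q

namespace Prolonged

variable {V : Set (ℝ × ℝ)} {A0 A1 A2 A3 ψ1 ψ2 ψ3 μ ν ρ : ℝ × ℝ → ℝ}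

/-- Solve `∂_y∂ₓψ₁ = ∂ₓ∂_yψ₁` for `∂ₓμ`; the coefficients are row 4 of `Ω₁`. -/
lemma μx (h : Prolonged V A0 A1 A2 A3 ψ1 ψ2 ψ3 μ ν ρ) {q : ℝ × ℝ} (hq : q ∈ V) :
    pdx μ q = -((-(4/3) * pdx A2 q + 4 * A0 q * A3 q + (2/3) * pdy A1 q) * ψ1 q
      + (-2 * pdy A0 q + (2/3) * pdx A1 q + 4 * A2 q * A0 q - (4/9) * (A1 q) ^ 2) * ψ2 q
      + (2 * pdx A0 q - 4 * A0 q * A1 q) * ψ3 q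
      - (1/3) * A1 q * μ q - 3 * A0 q * ν q) := by
  have hV := h.isOpen
  have dA0 := smooth_diff hV h.sA0 hq
  have dA1 := smooth_diff hV h.sA1 hq
  have dA2 := smooth_diff hV h.sA2 hq
  have dψ1 := smooth_diff hV h.sψ1 hq
  have dψ2 := smooth_diff hV h.sψ2 hq
  have dψ3 := smooth_diff hV h.sψ3 hq
  have dμ := smooth_diff hV h.sμ hq
  have key := pdy_pdx hV h.sψ1 hq
  rw [pdy_congr hV h.ψ1x hq, pdx_congr hV h.ψ1y hq] at key
  simp (disch := fun_prop) only [pdx_sub, pdx_mul, pdx_const, pdy_sub, pdy_mul,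
    pdy_const, h.ψ1x q hq, h.ψ1y q hq, h.ψ2x q hq, h.ψ2y q hq, h.ψ3x q hq] at key
  linear_combination key

/-- Solve `∂_y∂ₓψ₃ = ∂ₓ∂_yψ₃` for `∂_yν`; the coefficients are row 5 of `Ω₂`. -/
lemma νy (h : Prolonged V A0 A1 A2 A3 ψ1 ψ2 ψ3 μ ν ρ) {q : ℝ × ℝ} (hq : q ∈ V) :
    pdy ν q = -((-2 * pdy A3 q - 4 * A3 q * A2 q) * ψ1 q
      + (2 * pdx A3 q - (2/3) * pdy A2 q + 4 * A1 q * A3 q - (4/9) * (A2 q) ^ 2) * ψ2 q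
      + ((4/3) * pdy A1 q - (2/3) * pdx A2 q + 4 * A0 q * A3 q) * ψ3 q
      + 3 * A3 q * μ q + (1/3) * A2 q * ν q) := by
  have hV := h.isOpen
  have dA1 := smooth_diff hV h.sA1 hq
  have dA2 := smooth_diff hV h.sA2 hq
  have dA3 := smooth_diff hV h.sA3 hq
  have dψ1 := smooth_diff hV h.sψ1 hq
  have dψ2 := smooth_diff hV h.sψ2 hq
  have dψ3 := smooth_diff hV h.sψ3 hq
  have dν := smooth_diff hV h.sν hq
  have key := pdy_pdx hV h.sψ3 hq
  rw [pdy_congr hV h.ψ3x hq, pdx_congr hV h.ψ3y hq] at key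
  simp (disch := fun_prop) only [pdx_sub, pdx_mul, pdx_const, pdy_add, pdy_sub, pdy_mul,
    pdy_const, h.ψ1y q hq, h.ψ2x q hq, h.ψ2y q hq, h.ψ3x q hq, h.ψ3y q hq] at key
  linear_combination -key

/-- `∂ₓρ = ∂_y∂ₓμ`, computed from `μx`; the coefficients are row 6 of `Ω₁`. -/
lemma ρx (h : Prolonged V A0 A1 A2 A3 ψ1 ψ2 ψ3 μ ν ρ) {q : ℝ × ℝ} (hq : q ∈ V) :
    pdx ρ q = -((-(4/3) * pdx (pdy A2) q - (20/3) * A0 q * A2 q * A3 q + (2/3) * pdy (pdy A1) q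
        + 4 * A3 q * pdy A0 q - 2 * A0 q * pdy A3 q - (16/9) * A2 q * pdx A2 q
        + (8/9) * A2 q * pdy A1 q) * ψ1 q
      + ((2/3) * pdx (pdy A1) q - (4/3) * A1 q * pdy A1 q + 2 * A0 q * pdy A2 q
        - 2 * pdy (pdy A0) q + 4 * A2 q * pdy A0 q + 4 * A3 q * pdx A0 q
        + 6 * A0 q * pdx A3 q + (8/9) * A1 q * pdx A2 q
        + (4/3) * A0 q * A1 q * A3 q - (4/3) * A0 q * (A2 q) ^ 2) * ψ2 q
      + (2 * pdx (pdy A0) q + (2/3) * A0 q * pdx A2 q - (4/3) * A2 q * pdx A0 q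
        - 4 * A1 q * pdy A0 q - (4/3) * A0 q * pdy A1 q
        + (8/3) * A0 q * A1 q * A2 q + 4 * A3 q * (A0 q) ^ 2) * ψ3 q
      + ((4/3) * pdx A2 q - pdy A1 q + 5 * A0 q * A3 q) * μ q
      + ((1/3) * pdx A1 q - 4 * pdy A0 q + 3 * A2 q * A0 q - (2/9) * (A1 q) ^ 2) * ν q
      - (1/3) * A1 q * ρ q) := by
  have hV := h.isOpen
  have dA0 := smooth_diff hV h.sA0 hq
  have dA1 := smooth_diff hV h.sA1 hq
  have dA2 := smooth_diff hV h.sA2 hq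
  have dA3 := smooth_diff hV h.sA3 hq
  have dA0x := smooth_diff hV (smooth_pdx hV h.sA0) hq
  have dA0y := smooth_diff hV (smooth_pdy hV h.sA0) hq
  have dA1x := smooth_diff hV (smooth_pdx hV h.sA1) hq
  have dA1y := smooth_diff hV (smooth_pdy hV h.sA1) hq
  have dA2x := smooth_diff hV (smooth_pdx hV h.sA2) hq
  have dψ1 := smooth_diff hV h.sψ1 hq
  have dψ2 := smooth_diff hV h.sψ2 hq
  have dψ3 := smooth_diff hV h.sψ3 hq
  have dμ := smooth_diff hV h.sμ hq
  have dν := smooth_diff hV h.sν hq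
  have key := pdy_pdx hV h.sμ hq
  rw [pdx_congr hV h.μy hq, pdy_congr hV (fun p hp => h.μx hp) hq] at key
  rw [← key]
  simp (disch := fun_prop) only [pdy_neg, pdy_add, pdy_sub, pdy_mul, pdy_sq, pdy_const,
    h.ψ1y q hq, h.ψ2y q hq, h.ψ3y q hq, h.μy q hq, h.νy hq,
    pdy_pdx hV h.sA0 hq, pdy_pdx hV h.sA1 hq, pdy_pdx hV h.sA2 hq]
  ring

/-- `∂_yρ = ∂ₓ∂_yν`, computed from `νy`; the coefficients are row 6 of `Ω₂`. -/
lemma ρy (h : Prolonged V A0 A1 A2 A3 ψ1 ψ2 ψ3 μ ν ρ) {q : ℝ × ℝ} (hq : q ∈ V) :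
    pdy ρ q = -((-2 * pdx (pdy A3) q - 4 * A2 q * pdx A3 q - (4/3) * A3 q * pdx A2 q
        + (2/3) * A3 q * pdy A1 q - (4/3) * A1 q * pdy A3 q
        - 4 * A0 q * (A3 q) ^ 2 - (8/3) * A1 q * A2 q * A3 q) * ψ1 q
      + (2 * pdx (pdx A3) q - (4/3) * A2 q * pdx A2 q - (4/3) * A0 q * A2 q * A3 q
        - (2/3) * pdx (pdy A2) q + 4 * A1 q * pdx A3 q + 4 * A0 q * pdy A3 q
        + 6 * A3 q * pdy A0 q + (4/3) * A3 q * (A1 q) ^ 2 + 2 * A3 q * pdx A1 q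
        + (8/9) * A2 q * pdy A1 q) * ψ2 q
      + (-(2/3) * pdx (pdx A2) q + (8/9) * A1 q * pdx A2 q + 4 * A0 q * pdx A3 q
        - 2 * A3 q * pdx A0 q - (16/9) * A1 q * pdy A1 q + (4/3) * pdx (pdy A1) q
        + (20/3) * A0 q * A1 q * A3 q) * ψ3 q
      + (4 * pdx A3 q - (1/3) * pdy A2 q + 3 * A1 q * A3 q - (2/9) * (A2 q) ^ 2) * μ q
      + (pdx A2 q - (4/3) * pdy A1 q + 5 * A0 q * A3 q) * ν q
      + (1/3) * A2 q * ρ q) := by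
  have hV := h.isOpen
  have dA0 := smooth_diff hV h.sA0 hq
  have dA1 := smooth_diff hV h.sA1 hq
  have dA2 := smooth_diff hV h.sA2 hq
  have dA3 := smooth_diff hV h.sA3 hq
  have dA1y := smooth_diff hV (smooth_pdy hV h.sA1) hq
  have dA2x := smooth_diff hV (smooth_pdx hV h.sA2) hq
  have dA2y := smooth_diff hV (smooth_pdy hV h.sA2) hq
  have dA3x := smooth_diff hV (smooth_pdx hV h.sA3) hq
  have dA3y := smooth_diff hV (smooth_pdy hV h.sA3) hq
  have dψ1 := smooth_diff hV h.sψ1 hq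
  have dψ2 := smooth_diff hV h.sψ2 hq
  have dψ3 := smooth_diff hV h.sψ3 hq
  have dμ := smooth_diff hV h.sμ hq
  have dν := smooth_diff hV h.sν hq
  have key := pdy_pdx hV h.sν hq
  rw [pdy_congr hV h.νx hq, pdx_congr hV (fun p hp => h.νy hp) hq] at key
  rw [key]
  simp (disch := fun_prop) only [pdx_neg, pdx_add, pdx_sub, pdx_mul, pdx_sq, pdx_const,
    h.ψ1x q hq, h.ψ2x q hq, h.ψ3x q hq, h.νx q hq, h.μx hq]
  ring

/-- The remaining integrability condition `∂_y∂ₓρ = ∂ₓ∂_yρ` is exactly `V · Ψ = 0`. -/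
lemma Vrow_dot (h : Prolonged V A0 A1 A2 A3 ψ1 ψ2 ψ3 μ ν ρ) {q : ℝ × ℝ} (hq : q ∈ V) :
    (2 * pdy (Lio2 A0 A1 A2 A3) q + 4 * A2 q * Lio2 A0 A1 A2 A3 q
        + 8 * A3 q * Lio1 A0 A1 A2 A3 q) * ψ1 q
      + (-2 * pdy (Lio1 A0 A1 A2 A3) q - 2 * pdx (Lio2 A0 A1 A2 A3) q
        - (4/3) * A1 q * Lio2 A0 A1 A2 A3 q + (4/3) * A2 q * Lio1 A0 A1 A2 A3 q) * ψ2 q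
      + (2 * pdx (Lio1 A0 A1 A2 A3) q - 8 * A0 q * Lio2 A0 A1 A2 A3 q
        - 4 * A1 q * Lio1 A0 A1 A2 A3 q) * ψ3 q
      + -5 * Lio2 A0 A1 A2 A3 q * μ q + -5 * Lio1 A0 A1 A2 A3 q * ν q = 0 := by
  have hV := h.isOpen
  have dψ1 := smooth_diff hV h.sψ1 hq
  have dψ2 := smooth_diff hV h.sψ2 hq
  have dψ3 := smooth_diff hV h.sψ3 hq
  have dμ := smooth_diff hV h.sμ hq
  have dν := smooth_diff hV h.sν hq
  have dρ := smooth_diff hV h.sρ hq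
  have aux : ∀ A : ℝ × ℝ → ℝ, ContDiffOn ℝ ∞ A V →
      DifferentiableAt ℝ A q ∧ DifferentiableAt ℝ (pdx A) q ∧ DifferentiableAt ℝ (pdy A) q ∧
      DifferentiableAt ℝ (pdx (pdx A)) q ∧ DifferentiableAt ℝ (pdx (pdy A)) q ∧
      DifferentiableAt ℝ (pdy (pdy A)) q ∧ pdy (pdx A) q = pdx (pdy A) q ∧
      pdy (pdx (pdx A)) q = pdx (pdx (pdy A)) q ∧
      pdy (pdx (pdy A)) q = pdx (pdy (pdy A)) q := fun A sA =>
    have sx := smooth_pdx hV sA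
    have sy := smooth_pdy hV sA
    ⟨smooth_diff hV sA hq, smooth_diff hV sx hq, smooth_diff hV sy hq,
      smooth_diff hV (smooth_pdx hV sx) hq, smooth_diff hV (smooth_pdx hV sy) hq,
      smooth_diff hV (smooth_pdy hV sy) hq, pdy_pdx hV sA hq,
      (pdy_pdx hV sx hq).trans (pdx_congr hV (fun p hp => pdy_pdx hV sA hp) hq),
      pdy_pdx hV sy hq⟩
  obtain ⟨a0, a0x, a0y, a0xx, a0xy, a0yy, c0, -, c0y⟩ := aux A0 h.sA0
  obtain ⟨a1, a1x, a1y, a1xx, a1xy, a1yy, c1, -, c1y⟩ := aux A1 h.sA1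
  obtain ⟨a2, a2x, a2y, a2xx, a2xy, a2yy, c2, c2x, c2y⟩ := aux A2 h.sA2
  obtain ⟨a3, a3x, a3y, a3xx, a3xy, a3yy, c3, c3x, -⟩ := aux A3 h.sA3
  have key := pdy_pdx hV h.sρ hq
  rw [pdy_congr hV (fun p hp => h.ρx hp) hq, pdx_congr hV (fun p hp => h.ρy hp) hq] at key
  unfold Lio1 Lio2
  simp (disch := fun_prop) only [pdx_neg, pdx_add, pdx_sub, pdx_mul, pdx_sq, pdx_const,
    pdy_neg, pdy_add, pdy_sub, pdy_mul, pdy_sq, pdy_const,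
    h.ψ1x q hq, h.ψ1y q hq, h.ψ2x q hq, h.ψ2y q hq, h.ψ3x q hq, h.ψ3y q hq,
    h.μx hq, h.μy q hq, h.νx q hq, h.νy hq, h.ρx hq, h.ρy hq,
    c0, c0y, c1, c1y, c2, c2x, c2y, c3, c3x] at key ⊢
  linear_combination key

end Prolonged

/-! ### Propagating the linear constraint along the connection -/

open Matrix in
lemma pd_dotProduct {W Ψ : ℝ × ℝ → Fin 6 → ℝ} {q : ℝ × ℝ}
    (hW : ∀ i, DifferentiableAt ℝ (fun p => W p i) q)
    (hΨ : ∀ i, DifferentiableAt ℝ (fun p => Ψ p i) q) (a : Fin 2) :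
    pd a (fun p => W p ⬝ᵥ Ψ p) q
      = (fun i => pd a (fun p => W p i) q) ⬝ᵥ Ψ q + W q ⬝ᵥ (fun i => pd a (fun p => Ψ p i) q) := by
  have hm : ∀ i, DifferentiableAt ℝ (fun p => W p i * Ψ p i) q := fun i => (hW i).mul (hΨ i)
  fin_cases a
  · simp (disch := fun_prop) only [pd, dotProduct, Fin.sum_univ_six, Fin.zero_eta,
      cons_val_zero, pdx_add, pdx_mul]
    ring
  · simp (disch := fun_prop) only [pd, dotProduct, Fin.sum_univ_six, Fin.mk_one,
      cons_val_one, cons_val_fin_one, pdy_add, pdy_mul]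
    ring

lemma pd_congr {V : Set (ℝ × ℝ)} (hV : IsOpen V) {f g : ℝ × ℝ → ℝ} (a : Fin 2)
    (h : ∀ q ∈ V, f q = g q) {q : ℝ × ℝ} (hq : q ∈ V) : pd a f q = pd a g q := by
  fin_cases a
  · exact pdx_congr hV h hq
  · exact pdy_congr hV h hq

lemma pd_const (a : Fin 2) (c : ℝ) (q : ℝ × ℝ) : pd a (fun _ => c) q = 0 := by
  fin_cases a
  · exact pdx_const c q
  · exact pdy_const c q

lemma smooth_pd {V : Set (ℝ × ℝ)} (hV : IsOpen V) {f : ℝ × ℝ → ℝ} (a : Fin 2)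
    (hf : ContDiffOn ℝ ∞ f V) : ContDiffOn ℝ ∞ (pd a f) V := by
  fin_cases a
  · exact smooth_pdx hV hf
  · exact smooth_pdy hV hf

open Matrix in
/-- If `Ψ` is parallel (`∂_a Ψ = -Ω_a Ψ`) and `W · Ψ = 0`, then `(D_a W) · Ψ = ∂_a (W · Ψ) = 0`. -/
lemma Dop_dotProduct {V : Set (ℝ × ℝ)} (hV : IsOpen V) {A0 A1 A2 A3 : ℝ × ℝ → ℝ}
    {W Ψ : ℝ × ℝ → Fin 6 → ℝ}
    (hW : ∀ i, ContDiffOn ℝ ∞ (fun p => W p i) V) (hΨ : ∀ i, ContDiffOn ℝ ∞ (fun p => Ψ p i) V)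
    (hpar : ∀ a, ∀ q ∈ V, (fun i => pd a (fun p => Ψ p i) q) = -(Om A0 A1 A2 A3 a q *ᵥ Ψ q))
    (h0 : ∀ q ∈ V, W q ⬝ᵥ Ψ q = 0) (a : Fin 2) :
    ∀ q ∈ V, Dop A0 A1 A2 A3 a W q ⬝ᵥ Ψ q = 0 := by
  intro q hq
  have h1 := pd_dotProduct (fun i => smooth_diff hV (hW i) hq)
    (fun i => smooth_diff hV (hΨ i) hq) a
  rw [pd_congr hV a h0 hq, pd_const, hpar a q hq, dotProduct_neg] at h1
  rw [Dop, sub_dotProduct, ← dotProduct_mulVec]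
  linarith

lemma smooth_Dop {V : Set (ℝ × ℝ)} (hV : IsOpen V) {A0 A1 A2 A3 : ℝ × ℝ → ℝ}
    (hΩ : ∀ a i j, ContDiffOn ℝ ∞ (fun p => Om A0 A1 A2 A3 a p i j) V)
    {W : ℝ × ℝ → Fin 6 → ℝ} (hW : ∀ i, ContDiffOn ℝ ∞ (fun p => W p i) V) (a : Fin 2) (i : Fin 6) :
    ContDiffOn ℝ ∞ (fun p => Dop A0 A1 A2 A3 a W p i) V := by
  simp only [Dop, Pi.sub_apply, Matrix.vecMul, dotProduct]
  exact (smooth_pd hV a (hW i)).sub (ContDiffOn.sum fun j _ => (hW j).mul (hΩ a j i))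

section Smoothness

variable {V : Set (ℝ × ℝ)} {A0 A1 A2 A3 : ℝ × ℝ → ℝ}

set_option maxHeartbeats 1000000 in
lemma smooth_Om (hV : IsOpen V) (h0 : ContDiffOn ℝ ∞ A0 V) (h1 : ContDiffOn ℝ ∞ A1 V)
    (h2 : ContDiffOn ℝ ∞ A2 V) (h3 : ContDiffOn ℝ ∞ A3 V) (a : Fin 2) (i j : Fin 6) :
    ContDiffOn ℝ ∞ (fun p => Om A0 A1 A2 A3 a p i j) V := by
  have h0x := smooth_pdx hV h0
  have h0y := smooth_pdy hV h0
  have h1x := smooth_pdx hV h1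
  have h1y := smooth_pdy hV h1
  have h2x := smooth_pdx hV h2
  have h2y := smooth_pdy hV h2
  have h3x := smooth_pdx hV h3
  have h3y := smooth_pdy hV h3
  have h0xy := smooth_pdx hV h0y
  have h0yy := smooth_pdy hV h0y
  have h1xy := smooth_pdx hV h1y
  have h1yy := smooth_pdy hV h1y
  have h2xx := smooth_pdx hV h2x
  have h2xy := smooth_pdx hV h2y
  have h3xx := smooth_pdx hV h3x
  have h3xy := smooth_pdx hV h3y
  fin_cases a <;> fin_cases i <;> fin_cases j <;> simp [Om, Om1, Om2] <;> fun_prop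

lemma smooth_Lio1 (hV : IsOpen V) (h0 : ContDiffOn ℝ ∞ A0 V) (h1 : ContDiffOn ℝ ∞ A1 V)
    (h2 : ContDiffOn ℝ ∞ A2 V) (h3 : ContDiffOn ℝ ∞ A3 V) :
    ContDiffOn ℝ ∞ (Lio1 A0 A1 A2 A3) V := by
  have h0x := smooth_pdx hV h0
  have h0y := smooth_pdy hV h0
  have h1y := smooth_pdy hV h1
  have h2x := smooth_pdx hV h2
  have h2y := smooth_pdy hV h2
  have h3x := smooth_pdx hV h3
  have h0yy := smooth_pdy hV h0y
  have h1xy := smooth_pdx hV h1y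
  have h2xx := smooth_pdx hV h2x
  unfold Lio1
  fun_prop

lemma smooth_Lio2 (hV : IsOpen V) (h0 : ContDiffOn ℝ ∞ A0 V) (h1 : ContDiffOn ℝ ∞ A1 V)
    (h2 : ContDiffOn ℝ ∞ A2 V) (h3 : ContDiffOn ℝ ∞ A3 V) :
    ContDiffOn ℝ ∞ (Lio2 A0 A1 A2 A3) V := by
  have h0y := smooth_pdy hV h0
  have h1x := smooth_pdx hV h1
  have h1y := smooth_pdy hV h1
  have h2x := smooth_pdx hV h2
  have h2y := smooth_pdy hV h2
  have h3x := smooth_pdx hV h3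
  have h3y := smooth_pdy hV h3
  have h1yy := smooth_pdy hV h1y
  have h2xy := smooth_pdx hV h2y
  have h3xx := smooth_pdx hV h3x
  unfold Lio2
  fun_prop

lemma smooth_Vrow (hV : IsOpen V) (h0 : ContDiffOn ℝ ∞ A0 V) (h1 : ContDiffOn ℝ ∞ A1 V)
    (h2 : ContDiffOn ℝ ∞ A2 V) (h3 : ContDiffOn ℝ ∞ A3 V) (i : Fin 6) :
    ContDiffOn ℝ ∞ (fun p => Vrow A0 A1 A2 A3 p i) V := by
  have hL1 := smooth_Lio1 hV h0 h1 h2 h3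
  have hL2 := smooth_Lio2 hV h0 h1 h2 h3
  have hL1x := smooth_pdx hV hL1
  have hL1y := smooth_pdy hV hL1
  have hL2x := smooth_pdx hV hL2
  have hL2y := smooth_pdy hV hL2
  fin_cases i <;> simp [Vrow] <;> fun_prop

end Smoothness

/-- The column `Ψ = (ψ₁, ψ₂, ψ₃, μ, ν, ρ)` of the prolonged Liouville system. -/
def PsiCol (ψ1 ψ2 ψ3 μ ν ρ : ℝ × ℝ → ℝ) : ℝ × ℝ → Fin 6 → ℝ := fun p =>
  ![ψ1 p, ψ2 p, ψ3 p, μ p, ν p, ρ p]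

namespace Prolonged

variable {V : Set (ℝ × ℝ)} {A0 A1 A2 A3 ψ1 ψ2 ψ3 μ ν ρ : ℝ × ℝ → ℝ}

open Matrix in
/-- The prolonged Liouville system is the parallel transport equation `∂_a Ψ = -Ω_a Ψ`. -/
lemma parallel (h : Prolonged V A0 A1 A2 A3 ψ1 ψ2 ψ3 μ ν ρ) (a : Fin 2) (q : ℝ × ℝ) (hq : q ∈ V) :
    (fun i => pd a (fun p => PsiCol ψ1 ψ2 ψ3 μ ν ρ p i) q)
      = -(Om A0 A1 A2 A3 a q *ᵥ PsiCol ψ1 ψ2 ψ3 μ ν ρ q) := by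
  funext i
  fin_cases a
  · fin_cases i <;> simp [pd, PsiCol, Om, Om1]
    · rw [h.ψ1x q hq]; ring
    · rw [h.ψ2x q hq]; ring
    · rw [h.ψ3x q hq]; ring
    · rw [h.μx hq]; ring
    · rw [h.νx q hq]
    · rw [h.ρx hq]; ring
  · fin_cases i <;> simp [pd, PsiCol, Om, Om2]
    · rw [h.ψ1y q hq]; ring
    · rw [h.ψ2y q hq]; ring
    · rw [h.ψ3y q hq]; ring
    · rw [h.μy q hq]
    · rw [h.νy hq]; ring
    · rw [h.ρy hq]; ring

open Matrix in
/-- Every row of `M` annihilates the nonvanishing column `Ψ`, so `M` is singular. -/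
lemma det_Mmat (h : Prolonged V A0 A1 A2 A3 ψ1 ψ2 ψ3 μ ν ρ)
    (hne : ∀ q ∈ V, PsiCol ψ1 ψ2 ψ3 μ ν ρ q ≠ 0) {q : ℝ × ℝ} (hq : q ∈ V) :
    (Mmat A0 A1 A2 A3 q).det = 0 := by
  have hV := h.isOpen
  set Ψ := PsiCol ψ1 ψ2 ψ3 μ ν ρ with hΨdef
  have hΨ : ∀ i, ContDiffOn ℝ ∞ (fun p => Ψ p i) V := by
    intro i
    fin_cases i
    exacts [h.sψ1, h.sψ2, h.sψ3, h.sμ, h.sν, h.sρ]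
  have hΩ := smooth_Om hV h.sA0 h.sA1 h.sA2 h.sA3
  have s0 := smooth_Vrow hV h.sA0 h.sA1 h.sA2 h.sA3
  have s1 := fun a => smooth_Dop hV hΩ s0 a
  have k0 : ∀ q ∈ V, Vrow A0 A1 A2 A3 q ⬝ᵥ Ψ q = 0 := by
    intro q hq
    rw [← h.Vrow_dot hq]
    simp [Vrow, hΨdef, PsiCol, dotProduct, Fin.sum_univ_six]
  have k1 := fun a => Dop_dotProduct hV s0 hΨ h.parallel k0 a
  have k2 := fun a b => Dop_dotProduct hV (s1 b) hΨ h.parallel (k1 b) a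
  refine Matrix.exists_mulVec_eq_zero_iff.1 ⟨Ψ q, hne q hq, ?_⟩
  funext i
  fin_cases i
  · exact k0 q hq
  · exact k1 0 q hq
  · exact k1 1 q hq
  · exact k2 0 0 q hq
  · change ((1/2 : ℝ) • (Dop A0 A1 A2 A3 0 (Dop A0 A1 A2 A3 1 (Vrow A0 A1 A2 A3)) q
      + Dop A0 A1 A2 A3 1 (Dop A0 A1 A2 A3 0 (Vrow A0 A1 A2 A3)) q)) ⬝ᵥ Ψ q = 0
    rw [smul_dotProduct, add_dotProduct, k2 0 1 q hq, k2 1 0 q hq]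
    simp
  · exact k2 1 1 q hq

end Prolonged

lemma LiouvilleSystem.prolonged {V : Set (ℝ × ℝ)} (hV : IsOpen V)
    {A0 A1 A2 A3 ψ1 ψ2 ψ3 : ℝ × ℝ → ℝ}
    (hA0 : ContDiffOn ℝ ∞ A0 V) (hA1 : ContDiffOn ℝ ∞ A1 V) (hA2 : ContDiffOn ℝ ∞ A2 V)
    (hA3 : ContDiffOn ℝ ∞ A3 V) (h1 : ContDiffOn ℝ ∞ ψ1 V) (h2 : ContDiffOn ℝ ∞ ψ2 V)
    (h3 : ContDiffOn ℝ ∞ ψ3 V) (h : LiouvilleSystem V A0 A1 A2 A3 ψ1 ψ2 ψ3) :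
    Prolonged V A0 A1 A2 A3 ψ1 ψ2 ψ3 (fun p => 2 * pdx ψ2 p) (fun p => 2 * pdy ψ2 p)
      (fun p => 2 * pdx (pdy ψ2) p) := by
  have h2x := smooth_pdx hV h2
  have h2y := smooth_pdy hV h2
  refine ⟨hV, hA0, hA1, hA2, hA3, h1, h2, h3, contDiffOn_const.mul h2x, contDiffOn_const.mul h2y,
    contDiffOn_const.mul (smooth_pdx hV h2y), ?_, ?_, ?_, ?_, ?_, ?_, ?_, ?_⟩ <;> intro q hq <;>
    obtain ⟨e1, e2, e3, e4⟩ := h q hq <;>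
    have d2x := smooth_diff hV h2x hq <;> have d2y := smooth_diff hV h2y hq
  · exact e1
  · linear_combination e3
  · ring
  · ring
  · linear_combination e4
  · exact e2
  · simp (disch := fun_prop) only [pdy_mul, pdy_const, pdy_pdx hV h2 hq]
    ring
  · simp (disch := fun_prop) only [pdx_mul, pdx_const]
    ring

/-! ### From a metric to a solution of Liouville's system -/

/-- With `Δ = EG - F²` and any weight `w` obeying `3Δ dw = -2w dΔ`, that is `w = c |Δ|^(-2/3)`, the
rescaled metric coefficients `(wE, wF, wG)` solve Liouville's system. -/
lemma liouvilleSystem_of_metric {V : Set (ℝ × ℝ)} {A0 A1 A2 A3 E F G w : ℝ × ℝ → ℝ}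
    (hE : ∀ q ∈ V, DifferentiableAt ℝ E q) (hF : ∀ q ∈ V, DifferentiableAt ℝ F q)
    (hG : ∀ q ∈ V, DifferentiableAt ℝ G q) (hw : ∀ q ∈ V, DifferentiableAt ℝ w q)
    (hΔ : ∀ q ∈ V, E q * G q - (F q) ^ 2 ≠ 0)
    (hwx : ∀ q ∈ V, pdx w q = -(2/3) * w q / (E q * G q - (F q) ^ 2)
      * (pdx E q * G q + E q * pdx G q - 2 * F q * pdx F q))
    (hwy : ∀ q ∈ V, pdy w q = -(2/3) * w q / (E q * G q - (F q) ^ 2)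
      * (pdy E q * G q + E q * pdy G q - 2 * F q * pdy F q))
    (hA : ∀ q ∈ V,
        A0 q = (E q * pdy E q - 2 * E q * pdx F q + F q * pdx E q)
                 / (2 * (E q * G q - (F q) ^ 2)) ∧
        A1 q = (3 * F q * pdy E q + G q * pdx E q - 2 * F q * pdx F q - 2 * E q * pdx G q)
                 / (2 * (E q * G q - (F q) ^ 2)) ∧
        A2 q = (2 * F q * pdy F q + 2 * G q * pdy E q - 3 * F q * pdx G q - E q * pdy G q)
                 / (2 * (E q * G q - (F q) ^ 2)) ∧
        A3 q = (2 * G q * pdy F q - G q * pdx G q - F q * pdy G q)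
                 / (2 * (E q * G q - (F q) ^ 2))) :
    LiouvilleSystem V A0 A1 A2 A3 (fun p => w p * E p) (fun p => w p * F p)
      (fun p => w p * G p) := by
  intro q hq
  obtain ⟨e0, e1, e2, e3⟩ := hA q hq
  have hD := hΔ q hq
  have dE := hE q hq
  have dF := hF q hq
  have dG := hG q hq
  have dw := hw q hq
  simp (disch := fun_prop) only [pdx_mul, pdy_mul, hwx q hq, hwy q hq, e0, e1, e2, e3]
  refine ⟨?_, ?_, ?_, ?_⟩ <;> field_simp <;> ring

lemma pdx_rpow {f : ℝ × ℝ → ℝ} {q : ℝ × ℝ} (hf : DifferentiableAt ℝ f q) (h : f q ≠ 0) (r : ℝ) :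
    pdx (fun p => f p ^ r) q = pdx f q * r * f q ^ (r - 1) := by
  have h1 : HasDerivAt (fun t : ℝ => (t, q.2)) ((1 : ℝ), (0 : ℝ)) q.1 :=
    (hasDerivAt_id _).prodMk (hasDerivAt_const _ _)
  have h2 := HasFDerivAt.comp_hasDerivAt q.1 (f := fun t : ℝ => (t, q.2)) hf.hasFDerivAt h1
  rw [pdx_eq_fderiv hf]
  exact (h2.rpow_const (p := r) (Or.inl h)).deriv

lemma pdy_rpow {f : ℝ × ℝ → ℝ} {q : ℝ × ℝ} (hf : DifferentiableAt ℝ f q) (h : f q ≠ 0) (r : ℝ) :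
    pdy (fun p => f p ^ r) q = pdy f q * r * f q ^ (r - 1) := by
  have h1 : HasDerivAt (fun t : ℝ => (q.1, t)) ((0 : ℝ), (1 : ℝ)) q.2 :=
    (hasDerivAt_const _ _).prodMk (hasDerivAt_id _)
  have h2 := HasFDerivAt.comp_hasDerivAt q.2 (f := fun t : ℝ => (q.1, t)) hf.hasFDerivAt h1
  rw [pdy_eq_fderiv hf]
  exact (h2.rpow_const (p := r) (Or.inl h)).deriv

/-- **Main Theorem.** If the projective structure `(A₀,A₁,A₂,A₃)` (with continuous fifth
derivatives) is metrisable near `p`, then `det M([Γ]) = 0` on a neighbourhood of `p`. -/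
theorem metrisable_implies_detM_eq_zero (U : Set (ℝ × ℝ)) (hU : IsOpen U)
    (hUconn : IsConnected U) (A0 A1 A2 A3 : ℝ × ℝ → ℝ)
    (hA0 : ContDiffOn ℝ 5 A0 U) (hA1 : ContDiffOn ℝ 5 A1 U)
    (hA2 : ContDiffOn ℝ 5 A2 U) (hA3 : ContDiffOn ℝ 5 A3 U)
    (p : ℝ × ℝ) (hp : p ∈ U)
    (hmet : MetrisableNear U A0 A1 A2 A3 p) :
    ∃ V : Set (ℝ × ℝ), IsOpen V ∧ p ∈ V ∧ V ⊆ U ∧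
      ∀ q ∈ V, (Mmat A0 A1 A2 A3 q).det = 0 := by
  obtain ⟨V, hV, hpV, hVU, E, F, G, sE, sF, sG, hΔ, hA⟩ := hmet
  refine ⟨V, hV, hpV, hVU, ?_⟩
  have sEx := smooth_pdx hV sE
  have sEy := smooth_pdy hV sE
  have sFx := smooth_pdx hV sF
  have sFy := smooth_pdy hV sF
  have sGx := smooth_pdx hV sG
  have sGy := smooth_pdy hV sG
  have hΔ2 : ∀ q ∈ V, 2 * (E q * G q - (F q) ^ 2) ≠ 0 := fun q hq =>
    mul_ne_zero two_ne_zero (hΔ q hq)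
  have sΔ2 : ContDiffOn ℝ ∞ (fun q => 2 * (E q * G q - (F q) ^ 2)) V := by fun_prop
  -- On `V` the `Aᵢ` inherit the smoothness of the metric.
  have sA0 : ContDiffOn ℝ ∞ A0 V :=
    (ContDiffOn.div (by fun_prop) sΔ2 hΔ2).congr fun q hq => (hA q hq).1
  have sA1 : ContDiffOn ℝ ∞ A1 V :=
    (ContDiffOn.div (by fun_prop) sΔ2 hΔ2).congr fun q hq => (hA q hq).2.1
  have sA2 : ContDiffOn ℝ ∞ A2 V :=
    (ContDiffOn.div (by fun_prop) sΔ2 hΔ2).congr fun q hq => (hA q hq).2.2.1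
  have sA3 : ContDiffOn ℝ ∞ A3 V :=
    (ContDiffOn.div (by fun_prop) sΔ2 hΔ2).congr fun q hq => (hA q hq).2.2.2
  -- `(Δ²)^(-1/3)` is `|Δ|^(-2/3)` written with a positive base, so that both signatures are covered.
  set w : ℝ × ℝ → ℝ := fun q => ((E q * G q - (F q) ^ 2) ^ 2) ^ (-(1/3) : ℝ) with hw
  have hpos : ∀ q ∈ V, 0 < (E q * G q - (F q) ^ 2) ^ 2 := fun q hq => by
    have := hΔ q hq
    positivity
  have sw : ContDiffOn ℝ ∞ w V :=
    ContDiffOn.rpow_const_of_ne (by fun_prop) fun q hq => (hpos q hq).ne'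
  have hwr : ∀ q ∈ V, ((E q * G q - (F q) ^ 2) ^ 2) ^ (-(1/3) - 1 : ℝ)
      = w q / (E q * G q - (F q) ^ 2) ^ 2 := fun q hq => Real.rpow_sub_one (hpos q hq).ne' _
  have hL : LiouvilleSystem V A0 A1 A2 A3 (fun p => w p * E p) (fun p => w p * F p)
      (fun p => w p * G p) := by
    refine liouvilleSystem_of_metric (fun q hq => smooth_diff hV sE hq)
      (fun q hq => smooth_diff hV sF hq) (fun q hq => smooth_diff hV sG hq)
      (fun q hq => smooth_diff hV sw hq) hΔ ?_ ?_ hA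
    all_goals
      intro q hq
      have dE := smooth_diff hV sE hq
      have dF := smooth_diff hV sF hq
      have dG := smooth_diff hV sG hq
      have hD := hΔ q hq
    · rw [hw, pdx_rpow (by fun_prop) (hpos q hq).ne', hwr q hq]
      simp (disch := fun_prop) only [pdx_sq, pdx_sub, pdx_mul]
      field_simp
      ring
    · rw [hw, pdy_rpow (by fun_prop) (hpos q hq).ne', hwr q hq]
      simp (disch := fun_prop) only [pdy_sq, pdy_sub, pdy_mul]
      field_simp
      ring
  intro q hq
  refine (hL.prolonged hV sA0 sA1 sA2 sA3 (sw.mul sE) (sw.mul sF) (sw.mul sG)).det_Mmat ?_ hq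
  intro q hq h0
  have hwne : w q ≠ 0 := (Real.rpow_pos_of_pos (hpos q hq) _).ne'
  have hE0 : w q * E q = 0 := congrFun h0 0
  have hF0 : w q * F q = 0 := congrFun h0 1
  apply hΔ q hq
  rw [(mul_eq_zero.1 hE0).resolve_left hwne, (mul_eq_zero.1 hF0).resolve_left hwne]
  ring
end
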